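/- Let Y ⊂ ℙⁿ be a hypersurface of degree d whose only singularity is a point y of multiplicity m, with (Y, y) general. If d < m + n − 2, then the variety Σ of lines in Y through y is irreducible of dimension m + n − 2 − d ≥ 1. -/

import Mathlib

/-
Let `f` be a family of polynomials, as many as variables, with `deg f j ≤ a j`. If a Macaulay-type
determinant, that of the substitution `X j ^ a j ↦ f j` in bounded degree, is nonzero, then every
polynomial is uniquely a sum of terms `g_α(f) * X ^ α` with `α < a`, so the quotient by some of the
`f j` is free over the polynomial ring in the remaining ones. Multiplication by a variable has a
characteristic polynomial over that ring; if it is irreducible, the quotient is a domain, of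
dimension the number of remaining `f j`. Irreducibility of a monic polynomial is a Zariski open
condition on its coefficients, so a single system suffices: the deformed chain
`x i ^ δ i = x (i + 1) * x (r + 1) ^ (δ i - 1)` vanishes, after setting `x (r + 1) = 1`, on the
monomial curve `t ↦ (t, t ^ δ 0, t ^ (δ 0 * δ 1), …)`, whose parameter generates a field extension
of the largest possible degree and thus forces the characteristic polynomial to be irreducible.
-/

open MvPolynomial

noncomputable section

/-- An (affine) algebraic subset of `ℂ^ι`: the common zero locus of a set of polynomials. -/
def IsAlgSet {ι : Type*} (S : Set (ι → ℂ)) : Prop :=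
  ∃ T : Set (MvPolynomial ι ℂ), S = {x | ∀ p ∈ T, eval x p = 0}

/-- Irreducibility of a set in the Zariski sense. -/
def AlgIrreducible {ι : Type*} (S : Set (ι → ℂ)) : Prop :=
  S.Nonempty ∧ ∀ A B : Set (ι → ℂ), IsAlgSet A → IsAlgSet B →
    S ⊆ A ∪ B → S ⊆ A ∨ S ⊆ B

/-- Krull dimension of a set, via chains of irreducible algebraic subsets. -/
def algDim {ι : Type*} (S : Set (ι → ℂ)) : WithBot ℕ∞ :=
  Order.krullDim {T : Set (ι → ℂ) // IsAlgSet T ∧ AlgIrreducible T ∧ T ⊆ S}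

/-- A polynomial function on a complex vector space. -/
def IsPolynomialFun {M : Type*} [AddCommGroup M] [Module ℂ M] (g : M → ℂ) : Prop :=
  ∃ (k : ℕ) (l : Fin k → (M →ₗ[ℂ] ℂ)) (p : MvPolynomial (Fin k) ℂ),
    ∀ m, g m = eval (fun i => l i m) p

/-- A Zariski-open subset of a complex vector space: the complement of a common zero
locus of polynomial functions. -/
def IsZariskiOpen {M : Type*} [AddCommGroup M] [Module ℂ M] (U : Set M) : Prop :=
  ∃ T : Set (M → ℂ), (∀ g ∈ T, IsPolynomialFun g) ∧ Uᶜ = {m | ∀ g ∈ T, g m = 0}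

set_option synthInstance.maxHeartbeats 1000000

section TotalDegree

variable {σ B : Type*} [CommRing B]

lemma monomial_eq_smul_one (μ : σ →₀ ℕ) (b : B) : monomial μ b = b • monomial μ 1 := by
  rw [smul_monomial, smul_eq_mul, mul_one]

lemma monomial_one_eq_prod [Fintype σ] (μ : σ →₀ ℕ) : monomial μ (1 : B) = ∏ j, X j ^ μ j := by
  simp [monomial_eq, Finsupp.prod_fintype]

lemma forall_lt_or_exists_eq_single_add {σ : Type*} (a : σ → ℕ) (μ : σ →₀ ℕ) :
    (∀ j, μ j < a j) ∨ ∃ i ν, μ = .single i (a i) + ν := by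
  by_cases h : ∀ j, μ j < a j
  · exact .inl h
  · push Not at h
    obtain ⟨i, hi⟩ := h
    exact .inr ⟨i, exists_add_of_le (Finsupp.single_le_iff.2 hi)⟩

lemma totalDegree_X_pow_le (i : σ) (k : ℕ) : (X i ^ k : MvPolynomial σ B).totalDegree ≤ k := by
  rw [X_pow_eq_monomial]
  simpa using totalDegree_monomial_le (.single i k) (1 : B)

lemma monomial_one_mem_restrictTotalDegree {μ : σ →₀ ℕ} {e : ℕ} (h : μ.degree ≤ e) :
    monomial μ (1 : B) ∈ restrictTotalDegree σ B e :=
  (monomial_mem_restrictSupport B).2 (.inl h)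

lemma restrictTotalDegree_le_iff {e : ℕ} {V : Submodule B (MvPolynomial σ B)} :
    restrictTotalDegree σ B e ≤ V ↔ ∀ μ : σ →₀ ℕ, μ.degree ≤ e → monomial μ 1 ∈ V := by
  rw [restrictTotalDegree, restrictSupport_eq_span, Submodule.span_le]
  exact Set.image_subset_iff

lemma restrictTotalDegree_mono {e e' : ℕ} (h : e ≤ e') :
    restrictTotalDegree σ B e ≤ restrictTotalDegree σ B e' :=
  restrictTotalDegree_le_iff.2 fun _ hμ ↦ monomial_one_mem_restrictTotalDegree (hμ.trans h)

variable (k : ℕ)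

variable (σ B) in
/-- The monomials of degree at most `k` as a basis of the polynomials of degree at most `k`. -/
def monomialBasis : Module.Basis {μ : σ →₀ ℕ | μ.degree ≤ k} B (restrictTotalDegree σ B k) :=
  basisRestrictSupport B {μ : σ →₀ ℕ | μ.degree ≤ k}

variable {k}

lemma monomialBasis_repr_apply (v : restrictTotalDegree σ B k) (μ : {μ : σ →₀ ℕ | μ.degree ≤ k}) :
    (monomialBasis σ B k).repr v μ = coeff μ (v : MvPolynomial σ B) := rfl

lemma coe_monomialBasis (μ : {μ : σ →₀ ℕ | μ.degree ≤ k}) :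
    (monomialBasis σ B k μ : MvPolynomial σ B) = monomial μ 1 := by
  classical
  suffices h : (monomialBasis σ B k).repr
      ⟨monomial μ 1, monomial_one_mem_restrictTotalDegree μ.2⟩ = .single μ 1 by
    rw [← (monomialBasis σ B k).repr_symm_single_one, ← h, LinearEquiv.symm_apply_apply]
  ext ν
  rw [monomialBasis_repr_apply, coeff_monomial, Finsupp.single_apply]
  exact if_congr Subtype.coe_inj rfl rfl

end TotalDegree

section SubstPow

variable {σ B : Type*} [Fintype σ] [CommRing B] (f : σ → MvPolynomial σ B) (a : σ → ℕ)

/-- The linear substitution `X j ^ a j ↦ f j`: for `α j < a j` it sends the monomial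
`∏ j, X j ^ (α j + a j * β j)` to `∏ j, X j ^ α j * f j ^ β j`. -/
def substPow : MvPolynomial σ B →ₗ[B] MvPolynomial σ B :=
  (basisMonomials σ B).constr B fun μ ↦ ∏ j, X j ^ (μ j % a j) * f j ^ (μ j / a j)

lemma substPow_monomial_one (μ : σ →₀ ℕ) :
    substPow f a (monomial μ 1) = ∏ j, X j ^ (μ j % a j) * f j ^ (μ j / a j) :=
  (basisMonomials σ B).constr_basis B _ μ

variable {a}

lemma substPow_monomial_of_lt {μ : σ →₀ ℕ} (h : ∀ j, μ j < a j) :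
    substPow f a (monomial μ 1) = monomial μ 1 := by
  rw [substPow_monomial_one, monomial_one_eq_prod]
  exact Finset.prod_congr rfl fun j _ ↦ by
    rw [Nat.mod_eq_of_lt (h j), Nat.div_eq_of_lt (h j), pow_zero, mul_one]

lemma substPow_X_pow_mul {i : σ} (hi : 0 < a i) (v : MvPolynomial σ B) :
    substPow f a (X i ^ a i * v) = f i * substPow f a v := by
  classical
  suffices h : (substPow f a) ∘ₗ LinearMap.mulLeft B (X i ^ a i) =
      LinearMap.mulLeft B (f i) ∘ₗ substPow f a from LinearMap.congr_fun h v
  refine (basisMonomials σ B).ext fun μ ↦ ?_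
  rw [coe_basisMonomials]
  simp only [LinearMap.comp_apply, LinearMap.mulLeft_apply]
  rw [X_pow_eq_monomial, monomial_mul, one_mul, substPow_monomial_one, substPow_monomial_one,
    ← Fintype.prod_pi_mulSingle' i (f i), ← Finset.prod_mul_distrib]
  refine Finset.prod_congr rfl fun j _ ↦ ?_
  rcases eq_or_ne j i with rfl | hj
  · rw [Pi.mulSingle_eq_same, Finsupp.add_apply, Finsupp.single_eq_same, Nat.add_mod_left,
      Nat.add_div_left _ hi, pow_succ]
    ring
  · simp [hj]

lemma map_substPow {C : Type*} [CommRing C] (φ : B →+* C) (v : MvPolynomial σ B) :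
    map φ (substPow f a v) = substPow (fun j ↦ map φ (f j)) a (map φ v) := by
  induction v using MvPolynomial.induction_on' with
  | monomial μ b =>
    rw [map_monomial, monomial_eq_smul_one, monomial_eq_smul_one μ (φ b), LinearMap.map_smul,
      LinearMap.map_smul, substPow_monomial_one, substPow_monomial_one, smul_eq_C_mul,
      smul_eq_C_mul, map_mul, map_C, map_prod]
    simp only [map_mul, map_pow, map_X]
  | add p q hp hq => simp only [map_add, hp, hq]

lemma totalDegree_substPow_monomial_le (hf : ∀ j, (f j).totalDegree ≤ a j) (μ : σ →₀ ℕ) :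
    (substPow f a (monomial μ 1)).totalDegree ≤ μ.degree := by
  rw [substPow_monomial_one, Finsupp.degree_eq_sum]
  refine (totalDegree_finsetProd _ _).trans (Finset.sum_le_sum fun j _ ↦ ?_)
  calc (X j ^ (μ j % a j) * f j ^ (μ j / a j)).totalDegree
      ≤ μ j % a j + μ j / a j * (f j).totalDegree :=
        (totalDegree_mul _ _).trans (add_le_add (totalDegree_X_pow_le j _) (totalDegree_pow _ _))
    _ ≤ μ j % a j + a j * (μ j / a j) := by
        rw [mul_comm (a j)]; gcongr; exact hf j
    _ = μ j := Nat.mod_add_div _ _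

lemma substPow_mem_restrictTotalDegree (hf : ∀ j, (f j).totalDegree ≤ a j) {e : ℕ} :
    restrictTotalDegree σ B e ≤ (restrictTotalDegree σ B e).comap (substPow f a) :=
  restrictTotalDegree_le_iff.2 fun μ hμ ↦
    (mem_restrictTotalDegree _ _ _).2 ((totalDegree_substPow_monomial_le f hf μ).trans hμ)

variable (a) in
/-- The polynomials of degree at most `e` are images under `substPow f a` of such polynomials. -/
def SurjectsInDegree (e : ℕ) : Prop :=
  restrictTotalDegree σ B e ≤ (restrictTotalDegree σ B e).map (substPow f a)

variable {f}

lemma SurjectsInDegree.mul_mem {e e' : ℕ} (h : SurjectsInDegree f a e') {i : σ} (hi : 0 < a i)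
    (he : a i + e' ≤ e) {v : MvPolynomial σ B} (hv : v ∈ restrictTotalDegree σ B e') :
    f i * v ∈ (restrictTotalDegree σ B e).map (substPow f a) := by
  obtain ⟨u, hu, rfl⟩ := h hv
  refine ⟨X i ^ a i * u, ?_, substPow_X_pow_mul f hi u⟩
  rw [SetLike.mem_coe, mem_restrictTotalDegree] at hu ⊢
  exact (totalDegree_mul _ _).trans ((add_le_add (totalDegree_X_pow_le i _) hu).trans he)

lemma mul_substPow_mem {W : Submodule B (MvPolynomial σ B)} (p : MvPolynomial σ B) {k : ℕ}
    (h : ∀ ν : σ →₀ ℕ, ν.degree ≤ k → p * substPow f a (monomial ν 1) ∈ W)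
    {q : MvPolynomial σ B} (hq : q ∈ restrictTotalDegree σ B k) : p * substPow f a q ∈ W :=
  (restrictTotalDegree_le_iff (V := W.comap (LinearMap.mulLeft B p ∘ₗ substPow f a))).2 h hq

lemma SurjectsInDegree.X_mul_mem (ha : ∀ j, 0 < a j) (hf : ∀ j, (f j).totalDegree ≤ a j) {e : ℕ}
    (he : ∑ j, a j ≤ e) (h : ∀ e' ≤ e, SurjectsInDegree f a e') (l : σ) {ν : σ →₀ ℕ}
    (hν : ν.degree ≤ e) :
    X l * substPow f a (monomial ν 1) ∈ (restrictTotalDegree σ B (e + 1)).map (substPow f a) := by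
  rcases forall_lt_or_exists_eq_single_add a ν with hν' | ⟨i, ν', rfl⟩
  · have hdeg : ν.degree < ∑ j, a j := by
      rw [Finsupp.degree_eq_sum]
      exact Finset.sum_lt_sum_of_nonempty ⟨l, Finset.mem_univ l⟩ fun j _ ↦ hν' j
    rw [substPow_monomial_of_lt f hν', X, monomial_mul, one_mul]
    refine Submodule.map_mono (restrictTotalDegree_mono (Nat.le_succ e))
      (h e le_rfl (monomial_one_mem_restrictTotalDegree ?_))
    rw [map_add, Finsupp.degree_single]
    omega
  · rw [map_add, Finsupp.degree_single] at hν
    rw [monomial_single_add, substPow_X_pow_mul f (ha i), mul_left_comm]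
    have hi := ha i
    refine (h (1 + ν'.degree) (by omega)).mul_mem hi (by omega) ?_
    exact (mem_restrictTotalDegree _ _ _).2 ((totalDegree_mul _ _).trans
      (add_le_add ((totalDegree_X_pow_le l 1).trans_eq' (by rw [pow_one]))
        (totalDegree_substPow_monomial_le f hf ν')))

lemma SurjectsInDegree.succ (ha : ∀ j, 0 < a j) (hf : ∀ j, (f j).totalDegree ≤ a j) {e : ℕ}
    (he : ∑ j, a j ≤ e) (h : ∀ e' ≤ e, SurjectsInDegree f a e') :
    SurjectsInDegree f a (e + 1) := by
  refine restrictTotalDegree_le_iff.2 fun μ hμ ↦ ?_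
  rcases eq_or_ne μ 0 with rfl | hμ0
  · exact Submodule.map_mono (restrictTotalDegree_mono (Nat.le_succ e))
      (h e le_rfl (monomial_one_mem_restrictTotalDegree (by simp)))
  obtain ⟨l, hl⟩ := Finsupp.ne_iff.1 hμ0
  obtain ⟨μ', rfl⟩ : ∃ μ', μ = Finsupp.single l 1 + μ' :=
    exists_add_of_le (Finsupp.single_le_iff.2 (Nat.one_le_iff_ne_zero.2 hl))
  rw [map_add, Finsupp.degree_single] at hμ
  obtain ⟨v, hv, hvμ⟩ := h e le_rfl (monomial_one_mem_restrictTotalDegree (μ := μ') (by omega))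
  rw [monomial_single_add, pow_one, ← hvμ]
  exact mul_substPow_mem _ (fun ν hν ↦ X_mul_mem ha hf he h l hν) hv

lemma surjectsInDegree_of_weight_lt (ha : ∀ j, 0 < a j) (g : σ → MvPolynomial σ B) (w : σ → ℕ)
    (hg : ∀ j, (g j).totalDegree ≤ a j)
    (hw : ∀ j, ∀ ν ∈ (g j).support, Finsupp.weight w ν < a j * w j) (e : ℕ) :
    SurjectsInDegree (fun j ↦ X j ^ a j - g j) a e := by
  induction e using Nat.strong_induction_on with
  | _ e ihe =>
  suffices h : ∀ (n : ℕ) (μ : σ →₀ ℕ), Finsupp.weight w μ = n → μ.degree ≤ e → monomial μ 1 ∈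
      (restrictTotalDegree σ B e).map (substPow (fun j ↦ X j ^ a j - g j) a) from
    restrictTotalDegree_le_iff.2 fun μ ↦ h _ μ rfl
  intro n
  induction n using Nat.strong_induction_on with
  | _ n ihn =>
  intro μ hμn hμ
  rcases forall_lt_or_exists_eq_single_add a μ with hμ' | ⟨i, ν, rfl⟩
  · exact ⟨_, monomial_one_mem_restrictTotalDegree hμ, substPow_monomial_of_lt _ hμ'⟩
  have hsplit : monomial (.single i (a i) + ν) (1 : B) =
      (X i ^ a i - g i) * monomial ν 1 + g i * monomial ν 1 := by
    rw [monomial_single_add, sub_mul, sub_add_cancel]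
  rw [map_add, Finsupp.degree_single] at hμ
  rw [map_add, Finsupp.weight_single] at hμn
  rw [hsplit]
  refine add_mem ?_ ?_
  · have hi := ha i
    exact (ihe ν.degree (by omega)).mul_mem (ha i) hμ (monomial_one_mem_restrictTotalDegree le_rfl)
  · rw [(g i).as_sum, Finset.sum_mul]
    refine sum_mem fun ρ hρ ↦ ?_
    rw [monomial_eq_smul_one, smul_mul_assoc, monomial_mul, one_mul]
    refine Submodule.smul_mem _ _ (ihn _ ?_ _ rfl ?_)
    · rw [← hμn, map_add]
      have := hw i ρ hρ
      simpa using this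
    · rw [map_add]
      have := (le_totalDegree hρ).trans (hg i)
      exact (add_le_add this le_rfl).trans hμ

end SubstPow

section SubstPowField

variable {σ K : Type*} [Fintype σ] [Field K] {f : σ → MvPolynomial σ K} {a : σ → ℕ}

lemma surjectsInDegree_iff_disjoint_ker (hf : ∀ j, (f j).totalDegree ≤ a j) {e : ℕ} :
    SurjectsInDegree f a e ↔ Disjoint (restrictTotalDegree σ K e) (substPow f a).ker := by
  have hmem : ∀ v ∈ restrictTotalDegree σ K e, substPow f a v ∈ restrictTotalDegree σ K e :=
    fun v hv ↦ substPow_mem_restrictTotalDegree f hf hv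
  rw [← LinearMap.injective_restrict_iff hmem, LinearMap.injective_iff_surjective,
    ← LinearMap.range_eq_top, LinearMap.range_restrict, Submodule.comap_subtype_eq_top,
    SurjectsInDegree]

lemma SurjectsInDegree.surjectsInDegree (ha : ∀ j, 0 < a j) (hf : ∀ j, (f j).totalDegree ≤ a j)
    {k : ℕ} (hk : ∑ j, a j ≤ k) (h : SurjectsInDegree f a k) (e : ℕ) :
    SurjectsInDegree f a e := by
  induction e using Nat.strong_induction_on with
  | _ e ih =>
  rcases le_or_gt e k with hek | hke
  · rw [surjectsInDegree_iff_disjoint_ker hf] at h ⊢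
    exact h.mono_left (restrictTotalDegree_mono hek)
  · obtain ⟨e, rfl⟩ := Nat.exists_eq_add_one_of_ne_zero (Nat.ne_zero_of_lt hke)
    exact succ ha hf (hk.trans (Nat.lt_succ_iff.1 hke)) fun e' he' ↦ ih e' (Nat.lt_succ_of_le he')

lemma SurjectsInDegree.bijective_substPow (ha : ∀ j, 0 < a j)
    (hf : ∀ j, (f j).totalDegree ≤ a j) {k : ℕ} (hk : ∑ j, a j ≤ k)
    (h : SurjectsInDegree f a k) : Function.Bijective (substPow f a) := by
  have hself (v : MvPolynomial σ K) : v ∈ restrictTotalDegree σ K v.totalDegree :=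
    (mem_restrictTotalDegree _ _ _).2 le_rfl
  refine ⟨(injective_iff_map_eq_zero _).2 fun v hv ↦ ?_, fun v ↦ ?_⟩
  · have := (surjectsInDegree_iff_disjoint_ker hf).1 (h.surjectsInDegree ha hf hk v.totalDegree)
    exact Submodule.disjoint_def.1 this v (hself v) hv
  · obtain ⟨u, -, hu⟩ := h.surjectsInDegree ha hf hk v.totalDegree (hself v)
    exact ⟨u, hu⟩

end SubstPowField

section SubstPowMatrix

variable {σ B : Type*} [Fintype σ] [DecidableEq σ] [CommRing B] (f : σ → MvPolynomial σ B)
  (a : σ → ℕ) (k : ℕ)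

instance : Fintype {μ : σ →₀ ℕ | μ.degree ≤ k} :=
  (Finsupp.finite_of_degree_le k).fintype

/-- The matrix of `substPow f a` on polynomials of degree at most `k`, in the monomial basis. -/
def substPowMatrix : Matrix {μ : σ →₀ ℕ | μ.degree ≤ k} {μ : σ →₀ ℕ | μ.degree ≤ k} B :=
  .of fun μ ν ↦ coeff μ (substPow f a (monomial ν 1))

/-- The determinant of `substPow f a` on polynomials of degree at most `k`: a Macaulay-type
resultant of the family `f`. -/
def substPowDet : B := (substPowMatrix f a k).det

lemma map_substPowDet {C : Type*} [CommRing C] (φ : B →+* C) :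
    φ (substPowDet f a k) = substPowDet (fun j ↦ map φ (f j)) a k := by
  rw [substPowDet, substPowDet, RingHom.map_det]
  congr 1
  ext μ ν
  rw [RingHom.mapMatrix_apply, Matrix.map_apply, substPowMatrix, substPowMatrix, Matrix.of_apply,
    Matrix.of_apply, ← coeff_map, map_substPow, map_monomial, map_one]

variable {f a}

lemma toMatrix_restrict_substPow
    (h : ∀ v ∈ restrictTotalDegree σ B k, substPow f a v ∈ restrictTotalDegree σ B k) :
    LinearMap.toMatrix (monomialBasis σ B k) (monomialBasis σ B k) ((substPow f a).restrict h) =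
      substPowMatrix f a k := by
  ext μ ν
  rw [LinearMap.toMatrix_apply, monomialBasis_repr_apply, LinearMap.coe_restrict_apply,
    coe_monomialBasis]
  rfl

variable {k}

lemma exists_substPow_eq_substPowDet_smul (hf : ∀ j, (f j).totalDegree ≤ a j) {v : MvPolynomial σ B}
    (hv : v ∈ restrictTotalDegree σ B k) : ∃ u, substPow f a u = substPowDet f a k • v := by
  let b := monomialBasis σ B k
  have hmem := substPow_mem_restrictTotalDegree f hf (e := k)
  have h : (substPow f a).restrict hmem ∘ₗ Matrix.toLin b b (substPowMatrix f a k).adjugate =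
      substPowDet f a k • LinearMap.id := by
    rw [← Matrix.toLin_toMatrix b b ((substPow f a).restrict hmem), toMatrix_restrict_substPow,
      ← Matrix.toLin_mul, Matrix.mul_adjugate, map_smul, Matrix.toLin_one, substPowDet]
  exact ⟨_, congrArg Subtype.val (LinearMap.congr_fun h ⟨v, hv⟩)⟩

lemma surjectsInDegree_iff_substPowDet_ne_zero {K : Type*} [Field K] {f : σ → MvPolynomial σ K}
    (hf : ∀ j, (f j).totalDegree ≤ a j) : SurjectsInDegree f a k ↔ substPowDet f a k ≠ 0 := by
  have hmem := substPow_mem_restrictTotalDegree f hf (e := k)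
  rw [substPowDet, ← isUnit_iff_ne_zero, ← toMatrix_restrict_substPow k hmem,
    ← Matrix.isUnit_iff_isUnit_det, LinearMap.isUnit_toMatrix_iff,
    LinearMap.isUnit_iff_range_eq_top, LinearMap.range_restrict, Submodule.comap_subtype_eq_top,
    SurjectsInDegree]

end SubstPowMatrix

section AdicSum

variable {σ B : Type*} [Fintype σ] [DecidableEq σ] [CommRing B]
  (f : σ → MvPolynomial σ B) (a : σ → ℕ)

/-- The sum `∑ α, g α (f) * X ^ α` over the exponents `α` with `α j < a j`: the analogue, for the
family `f`, of an expansion in powers of a single polynomial. -/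
def adicSum : ((∀ j, Fin (a j)) → MvPolynomial σ B) →ₗ[B] MvPolynomial σ B :=
  ∑ α, LinearMap.mulRight B (∏ j, X j ^ (α j : ℕ)) ∘ₗ (aeval f).toLinearMap ∘ₗ LinearMap.proj α

lemma adicSum_apply (g : (∀ j, Fin (a j)) → MvPolynomial σ B) :
    adicSum f a g = ∑ α, aeval f (g α) * ∏ j, X j ^ (α j : ℕ) := by
  simp only [adicSum, LinearMap.sum_apply]
  rfl

variable {a}

/-- Division with remainder of exponents: `(α, β) ↦ α + a * β`. -/
def divModEquiv (ha : ∀ j, 0 < a j) : (Σ _ : ∀ j, Fin (a j), σ →₀ ℕ) ≃ (σ →₀ ℕ) where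
  toFun p := Finsupp.equivFunOnFinite.symm fun j ↦ p.1 j + a j * p.2 j
  invFun μ := ⟨fun j ↦ ⟨μ j % a j, Nat.mod_lt _ (ha j)⟩,
    Finsupp.equivFunOnFinite.symm fun j ↦ μ j / a j⟩
  left_inv := by
    rintro ⟨α, β⟩
    refine Sigma.ext (funext fun j ↦ Fin.ext ?_) (heq_of_eq (Finsupp.ext fun j ↦ ?_))
    · simp [Nat.mod_eq_of_lt (α j).2]
    · simp [Nat.add_mul_div_left _ _ (ha j), Nat.div_eq_of_lt (α j).2]
  right_inv μ := Finsupp.ext fun j ↦ Nat.mod_add_div _ _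

lemma adicSum_eq_substPow_comp (ha : ∀ j, 0 < a j) :
    adicSum f a = substPow f a ∘ₗ
      ((Pi.basis fun _ ↦ basisMonomials σ B).equiv (basisMonomials σ B)
        (divModEquiv ha)).toLinearMap := by
  refine (Pi.basis fun _ ↦ basisMonomials σ B).ext fun ⟨α, β⟩ ↦ ?_
  rw [LinearMap.comp_apply, LinearEquiv.coe_coe, Module.Basis.equiv_apply, coe_basisMonomials,
    substPow_monomial_one, adicSum_apply, Pi.basis_apply, Finset.sum_eq_single α]
  · dsimp only
    rw [Pi.single_eq_same, coe_basisMonomials]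
    dsimp only
    rw [monomial_one_eq_prod, map_prod, ← Finset.prod_mul_distrib]
    refine Finset.prod_congr rfl fun j _ ↦ ?_
    simp [divModEquiv, Nat.mod_eq_of_lt (α j).2, Nat.add_mul_div_left _ _ (ha j),
      Nat.div_eq_of_lt (α j).2, mul_comm]
  · intro α' _ hα'
    rw [Pi.single_eq_of_ne hα', map_zero, zero_mul]
  · simp

variable {f}

lemma bijective_adicSum (ha : ∀ j, 0 < a j) (h : Function.Bijective (substPow f a)) :
    Function.Bijective (adicSum f a) := by
  rw [adicSum_eq_substPow_comp f ha]
  exact h.comp (LinearEquiv.bijective _)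

lemma range_adicSum (ha : ∀ j, 0 < a j) : (adicSum f a).range = (substPow f a).range := by
  rw [adicSum_eq_substPow_comp f ha, LinearEquiv.range_comp]

end AdicSum

section CharpolyCriterion

open scoped TensorProduct

variable {R E : Type*} [CommRing R] [CommRing E] [Algebra R E]

lemma isDomain_of_finrank_eq_natDegree {F L : Type*} [Field F] [CommRing L] [Algebra F L]
    {p : Polynomial F} (hp : Irreducible p) (hL : Module.finrank F L = p.natDegree) {w : L}
    (hw : Polynomial.aeval w p = 0) : IsDomain L := by
  have := Fact.mk hp
  have hpos : 0 < Module.finrank F L := hL ▸ hp.natDegree_pos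
  have := Module.finite_of_finrank_pos hpos
  have := Module.nontrivial_of_finrank_pos hpos
  have hfin : FiniteDimensional F (AdjoinRoot p) := (AdjoinRoot.powerBasis hp.ne_zero).finite
  let ψ : AdjoinRoot p →ₐ[F] L := AdjoinRoot.liftAlgHom p (Algebra.ofId F L) w hw
  have hψ : Function.Injective ψ.toLinearMap := ψ.toRingHom.injective
  have hdim : Module.finrank F (AdjoinRoot p) = Module.finrank F L := by
    rw [hL, (AdjoinRoot.powerBasis hp.ne_zero).finrank, AdjoinRoot.powerBasis_dim]
  have hbij : Function.Bijective ψ :=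
    ⟨hψ, (LinearMap.injective_iff_surjective_of_finrank_eq_finrank hdim).1 hψ⟩
  exact (AlgEquiv.ofBijective ψ hbij).symm.toMulEquiv.isDomain _

lemma isDomain_of_irreducible_charpoly_leftMulMatrix [IsDomain R] [IsIntegrallyClosed R]
    {ι : Type*} [Fintype ι] [DecidableEq ι] (b : Module.Basis ι R E) {w : E}
    (h : Irreducible (Algebra.leftMulMatrix b w).charpoly) : IsDomain E := by
  let F := FractionRing R
  have := Module.Free.of_basis b
  have := Module.Finite.of_basis b
  let p := (Algebra.lmul R E w).charpoly
  have hp : Irreducible p := by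
    rwa [Algebra.leftMulMatrix_apply, LinearMap.charpoly_toMatrix] at h
  have hmonic : p.Monic := LinearMap.charpoly_monic _
  have hdim : Module.finrank F (F ⊗[R] E) = (p.map (algebraMap R F)).natDegree := by
    rw [Module.finrank_baseChange, hmonic.natDegree_map, LinearMap.charpoly_natDegree]
  have hroot : Polynomial.aeval (1 ⊗ₜ[R] w : F ⊗[R] E) (p.map (algebraMap R F)) = 0 := by
    rw [Polynomial.aeval_map_algebraMap, ← Algebra.TensorProduct.includeRight_apply,
      Polynomial.aeval_algHom_apply, Algebra.aeval_self_charpoly_lmul, map_zero]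
  have := isDomain_of_finrank_eq_natDegree
    (hmonic.irreducible_iff_irreducible_map_fraction_map.1 hp) hdim hroot
  exact (Algebra.TensorProduct.includeRight_injective (A := F) (B := E)
    (IsFractionRing.injective R F)).isDomain Algebra.TensorProduct.includeRight.toRingHom

lemma ringKrullDim_eq_of_isIntegral [Algebra.IsIntegral R E] [FaithfulSMul R E] :
    ringKrullDim E = ringKrullDim R := by
  refine le_antisymm ?_ (iSup_le fun l ↦ ?_)
  · refine Order.krullDim_le_of_strictMono (PrimeSpectrum.comap (algebraMap R E)) fun p q hpq ↦ ?_
    have hlt : p.asIdeal < q.asIdeal := hpq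
    obtain ⟨x, hx, hx'⟩ := SetLike.exists_of_lt hlt
    exact Ideal.comap_lt_comap_of_integral_mem_sdiff hlt.le ⟨hx, hx'⟩
      (Algebra.IsIntegral.isIntegral x)
  · obtain ⟨P, hP⟩ := Algebra.IsIntegral.comap_surjective R E l.head
    have : P.asIdeal.LiesOver l.head.asIdeal := ⟨by rw [← hP]; rfl⟩
    obtain ⟨L, hL, -⟩ := Ideal.exists_ltSeries_of_hasGoingUp l P.asIdeal
    rw [← hL]
    exact le_iSup (fun L : LTSeries (PrimeSpectrum E) ↦ (L.length : WithBot ℕ∞)) L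

end CharpolyCriterion

section KillCompl

variable {σ K : Type*} [CommRing K] {s : Set σ}

lemma killCompl_X_of_mem {j : σ} (hj : j ∈ s) :
    killCompl (σ := ↥sᶜ) Subtype.val_injective (X j : MvPolynomial σ K) = 0 := by
  simp [killCompl, hj]

lemma killCompl_X_of_notMem {j : σ} (hj : j ∉ s) :
    killCompl Subtype.val_injective (X j : MvPolynomial σ K) = X (⟨j, hj⟩ : ↥sᶜ) := by
  rw [← rename_X Subtype.val (⟨j, hj⟩ : ↥sᶜ), killCompl_rename_app]

end KillCompl

section Quotient

variable {σ K : Type*} [CommRing K] (f : σ → MvPolynomial σ K) (s : Set σ)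

/-- The subalgebra generated by the `f j` with `j ∉ s`, as a polynomial algebra acting on the
quotient by the `f j` with `j ∈ s`. -/
def paramHom : MvPolynomial ↥sᶜ K →ₐ[K] MvPolynomial σ K ⧸ Ideal.span (f '' s) :=
  (Ideal.Quotient.mkₐ K _).comp (aeval fun j : ↥sᶜ ↦ f j)

local instance : Algebra (MvPolynomial ↥sᶜ K) (MvPolynomial σ K ⧸ Ideal.span (f '' s)) :=
  (paramHom f s).toRingHom.toAlgebra

lemma mk_aeval_eq_algebraMap (g : MvPolynomial σ K) :
    Ideal.Quotient.mk (Ideal.span (f '' s)) (aeval f g) =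
      algebraMap (MvPolynomial ↥sᶜ K) _ (killCompl Subtype.val_injective g) := by
  suffices h : (Ideal.Quotient.mkₐ K (Ideal.span (f '' s))).comp (aeval f) =
      (paramHom f s).comp (killCompl Subtype.val_injective) from DFunLike.congr_fun h g
  refine algHom_ext fun j ↦ ?_
  rw [AlgHom.comp_apply, AlgHom.comp_apply, aeval_X]
  by_cases hj : j ∈ s
  · rw [killCompl_X_of_mem hj, map_zero]
    exact Ideal.Quotient.eq_zero_iff_mem.2 (Ideal.subset_span ⟨j, hj, rfl⟩)
  · rw [killCompl_X_of_notMem hj, paramHom, AlgHom.comp_apply, aeval_X]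

variable [Fintype σ] [DecidableEq σ] {f} {a : σ → ℕ}

lemma mk_adicSum (g : (∀ j, Fin (a j)) → MvPolynomial σ K) :
    Ideal.Quotient.mk (Ideal.span (f '' s)) (adicSum f a g) =
      ∑ α, (killCompl Subtype.val_injective (g α) : MvPolynomial ↥sᶜ K) •
        Ideal.Quotient.mk (Ideal.span (f '' s)) (∏ j, X j ^ (α j : ℕ)) := by
  simp only [adicSum_apply, map_sum, map_mul, mk_aeval_eq_algebraMap, Algebra.smul_def]

variable {s}

lemma exists_adicSum_eq_of_mem_span (h : Function.Surjective (adicSum f a))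
    {p : MvPolynomial σ K} (hp : p ∈ Ideal.span (f '' s)) :
    ∃ g, (∀ α, (killCompl Subtype.val_injective (g α) : MvPolynomial ↥sᶜ K) = 0) ∧
      adicSum f a g = p := by
  induction hp using Submodule.closure_induction with
  | zero => exact ⟨0, fun _ ↦ map_zero _, map_zero _⟩
  | add p q _ _ hp hq =>
    obtain ⟨g, hg, rfl⟩ := hp
    obtain ⟨g', hg', rfl⟩ := hq
    exact ⟨g + g', fun α ↦ by rw [Pi.add_apply, map_add, hg, hg', add_zero], map_add _ _ _⟩
  | smul_mem r q hq =>
    obtain ⟨j, hj, rfl⟩ := hq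
    obtain ⟨g, rfl⟩ := h r
    refine ⟨fun α ↦ X j * g α, fun α ↦ by rw [map_mul, killCompl_X_of_mem hj, zero_mul], ?_⟩
    simp only [adicSum_apply, map_mul, aeval_X, smul_eq_mul, Finset.sum_mul]
    exact Finset.sum_congr rfl fun α _ ↦ by ring

variable (s) in
/-- If every polynomial has a unique expansion `adicSum f a g`, the monomials `∏ j, X j ^ α j` with
`α j < a j` are a basis of the quotient by the `f j` with `j ∈ s` over the polynomials in the
others. -/
def quotientBasis (h : Function.Bijective (adicSum f a)) :
    Module.Basis (∀ j, Fin (a j)) (MvPolynomial ↥sᶜ K) (MvPolynomial σ K ⧸ Ideal.span (f '' s)) :=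
  .mk (v := fun α ↦ Ideal.Quotient.mk _ (∏ j, X j ^ (α j : ℕ)))
    (Fintype.linearIndependent_iff.2 fun c hc ↦ by
      let g (α : ∀ j, Fin (a j)) : MvPolynomial σ K := rename Subtype.val (c α)
      have hg (α) : killCompl Subtype.val_injective (g α) = c α := killCompl_rename_app _ _
      have hmk : Ideal.Quotient.mk (Ideal.span (f '' s)) (adicSum f a g) = 0 := by
        rw [mk_adicSum, ← hc]
        simp only [hg]
      obtain ⟨g', hg', hgg'⟩ := exists_adicSum_eq_of_mem_span h.2
        (Ideal.Quotient.eq_zero_iff_mem.1 hmk)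
      exact fun α ↦ by rw [← hg, ← h.1 hgg', hg'])
    fun x _ ↦ by
      obtain ⟨p, rfl⟩ := Ideal.Quotient.mk_surjective x
      obtain ⟨g, rfl⟩ := h.2 p
      rw [mk_adicSum]
      exact sum_mem fun α _ ↦ Submodule.smul_mem _ _ (Submodule.subset_span ⟨α, rfl⟩)

lemma quotientBasis_apply (h : Function.Bijective (adicSum f a)) (α : ∀ j, Fin (a j)) :
    quotientBasis s h α = Ideal.Quotient.mk _ (∏ j, X j ^ (α j : ℕ)) :=
  Module.Basis.mk_apply ..

lemma leftMulMatrix_quotientBasis (h : Function.Bijective (adicSum f a)) {w : MvPolynomial σ K}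
    {M : Matrix (∀ j, Fin (a j)) (∀ j, Fin (a j)) (MvPolynomial σ K)}
    (hM : ∀ β, w * ∏ j, X j ^ (β j : ℕ) = adicSum f a fun α ↦ M α β) :
    Algebra.leftMulMatrix (quotientBasis s h) (Ideal.Quotient.mk _ w) =
      M.map (killCompl Subtype.val_injective) := by
  ext1 α β
  rw [Algebra.leftMulMatrix_eq_repr_mul, quotientBasis_apply, ← map_mul, hM, mk_adicSum]
  simp only [← quotientBasis_apply h, Module.Basis.repr_sum_self, Matrix.map_apply]

theorem isPrime_span_of_irreducible_charpoly {K : Type*} [Field K] {f : σ → MvPolynomial σ K}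
    (h : Function.Bijective (adicSum f a)) {w : MvPolynomial σ K}
    {M : Matrix (∀ j, Fin (a j)) (∀ j, Fin (a j)) (MvPolynomial σ K)}
    (hM : ∀ β, w * ∏ j, X j ^ (β j : ℕ) = adicSum f a fun α ↦ M α β)
    (hirr : Irreducible (M.map (killCompl (σ := ↥sᶜ) Subtype.val_injective)).charpoly) :
    (Ideal.span (f '' s)).IsPrime := by
  rw [← leftMulMatrix_quotientBasis h hM] at hirr
  exact (Ideal.Quotient.isDomain_iff_prime _).1
    (isDomain_of_irreducible_charpoly_leftMulMatrix _ hirr)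

theorem ringKrullDim_quotient_span {K : Type*} [Field K] {f : σ → MvPolynomial σ K}
    (ha : ∀ j, 0 < a j) (h : Function.Bijective (adicSum f a)) :
    ringKrullDim (MvPolynomial σ K ⧸ Ideal.span (f '' s)) = Nat.card ↥sᶜ := by
  let b := quotientBasis s h
  have := Module.Free.of_basis b
  have := Module.Finite.of_basis b
  have : Nontrivial (MvPolynomial σ K ⧸ Ideal.span (f '' s)) :=
    nontrivial_of_ne _ _ (b.ne_zero fun j ↦ ⟨0, ha j⟩)
  rw [ringKrullDim_eq_of_isIntegral (R := MvPolynomial ↥sᶜ K),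
    MvPolynomial.ringKrullDim_of_isNoetherianRing, ringKrullDim_eq_zero_of_field, zero_add]

end Quotient

section Bivariate

open scoped Polynomial
open Polynomial (map_map mapRingHom)

variable {B ι : Type*} [CommRing B]

lemma coeff_coeff_swap (p : B[X][X]) (i j : ℕ) :
    ((Polynomial.Bivariate.swap p).coeff i).coeff j = (p.coeff j).coeff i := by
  induction p using Polynomial.induction_on' with
  | add p q hp hq => simp only [map_add, Polynomial.coeff_add, hp, hq]
  | monomial n r =>
    induction r using Polynomial.induction_on' with
    | add r s hr hs =>
      simp only [map_add, Polynomial.coeff_add, hr, hs]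
    | monomial k b =>
      rw [Polynomial.Bivariate.swap_monomial_monomial, Polynomial.coeff_monomial,
        Polynomial.coeff_monomial]
      split_ifs <;> simp_all [Polynomial.coeff_monomial]

lemma natDegree_swap_le_iff {p : B[X][X]} {D : ℕ} :
    (Polynomial.Bivariate.swap p).natDegree ≤ D ↔ ∀ i, (p.coeff i).natDegree ≤ D := by
  simp only [Polynomial.natDegree_le_iff_coeff_eq_zero, Polynomial.ext_iff, coeff_coeff_swap,
    Polynomial.coeff_zero]
  exact ⟨fun h i k hk ↦ h k hk i, fun h k hk i ↦ h i k hk⟩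

lemma natDegree_coeff_le_of_dvd [IsDomain B] {p q : B[X][X]} (hp : p ≠ 0) (hqp : q ∣ p) {D : ℕ}
    (hD : ∀ i, (p.coeff i).natDegree ≤ D) (i : ℕ) : (q.coeff i).natDegree ≤ D := by
  revert i
  rw [← natDegree_swap_le_iff] at hD ⊢
  refine (Polynomial.natDegree_le_of_dvd (map_dvd _ hqp) ?_).trans hD
  rwa [Ne, EmbeddingLike.map_eq_zero_iff]

lemma exists_natDegree_coeff_le (p : B[X][X]) : ∃ D, ∀ i, (p.coeff i).natDegree ≤ D :=
  ⟨_, natDegree_swap_le_iff.1 le_rfl⟩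

lemma exists_polynomial_pi_map_eval {p : ι → B[X]} {D : ℕ} (hp : ∀ i, (p i).natDegree ≤ D) :
    ∃ P : (ι → B)[X], P.natDegree ≤ D ∧ ∀ i, P.map (Pi.evalRingHom _ i) = p i := by
  refine ⟨∑ k ∈ Finset.range (D + 1), .monomial k fun i ↦ (p i).coeff k, ?_, fun i ↦ ?_⟩
  · exact Polynomial.natDegree_sum_le_of_forall_le _ _ fun k hk ↦
      (Polynomial.natDegree_monomial_le _).trans (Finset.mem_range_succ_iff.1 hk)
  · rw [(p i).as_sum_range' (D + 1) (Nat.lt_succ_iff.2 (hp i)), Polynomial.map_sum]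
    simp only [Polynomial.map_monomial, Pi.evalRingHom_apply]

lemma exists_monic_pi_map_eval {q : ι → B[X][X]} {e D : ℕ}
    (hmonic : ∀ i, (q i).Monic) (he : ∀ i, (q i).natDegree = e)
    (hD : ∀ i k, ((q i).coeff k).natDegree ≤ D) :
    ∃ Q : (ι → B)[X][X], Q.Monic ∧ (∀ i, Q.map (mapRingHom (Pi.evalRingHom _ i)) = q i) := by
  obtain ⟨P, hPe, hP⟩ := exists_polynomial_pi_map_eval fun i ↦ (he i).le
  have hPmonic : P.Monic := Polynomial.monic_of_natDegree_le_of_coeff_eq_one e hPe <|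
    funext fun i ↦ by
      have := hmonic i
      rw [Polynomial.Monic, Polynomial.leadingCoeff, he, ← hP, Polynomial.coeff_map] at this
      exact this
  let τ : (ι → B)[X] →+* ι → B[X] := RingHom.pi fun i ↦ mapRingHom (Pi.evalRingHom _ i)
  have hlift : P ∈ Polynomial.lifts τ := (Polynomial.lifts_iff_coeff_lifts P).2 fun k ↦ by
    obtain ⟨c, -, hc⟩ := exists_polynomial_pi_map_eval fun i ↦ hD i k
    refine ⟨c, funext fun i ↦ (hc i).trans ?_⟩
    rw [← hP, Polynomial.coeff_map]
    rfl
  obtain ⟨Q, hQP, -, hQ⟩ := Polynomial.lifts_and_natDegree_eq_and_monic hlift hPmonic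
  refine ⟨Q, hQ, fun i ↦ ?_⟩
  rw [← hP, ← hQP, Polynomial.map_map]
  rfl

lemma eq_zero_of_map_eval {p : (ι → B)[X][X]}
    (h : ∀ i, p.map (mapRingHom (Pi.evalRingHom _ i)) = 0) : p = 0 := by
  ext k j i
  have := congrArg (fun q ↦ (q.coeff k).coeff j) (h i)
  simpa using this

end Bivariate

section ZariskiNhds

variable {A K : Type*} [CommRing A] [Field K]

/-- The neighbourhoods of `φ₀` in the Zariski topology on the `K`-points of `A`. -/
def zariskiNhds (φ₀ : A →+* K) : Filter (A →+* K) :=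
  .comap (fun φ ↦ PrimeSpectrum.comap φ ⊥) (nhds (PrimeSpectrum.comap φ₀ ⊥))

lemma eventually_zariskiNhds {φ₀ : A →+* K} {P : (A →+* K) → Prop} :
    (∀ᶠ φ in zariskiNhds φ₀, P φ) ↔ ∃ h, φ₀ h ≠ 0 ∧ ∀ φ : A →+* K, φ h ≠ 0 → P φ := by
  have hbasis := (PrimeSpectrum.isTopologicalBasis_basic_opens.nhds_hasBasis
    (a := PrimeSpectrum.comap φ₀ ⊥)).comap fun φ : A →+* K ↦ PrimeSpectrum.comap φ ⊥
  rw [zariskiNhds, hbasis.eventually_iff]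
  constructor
  · rintro ⟨_, ⟨⟨h, rfl⟩, hh⟩, hP⟩
    exact ⟨h, hh, fun φ hφ ↦ hP hφ⟩
  · rintro ⟨h, hh, hP⟩
    exact ⟨_, ⟨⟨h, rfl⟩, hh⟩, fun φ hφ ↦ hP φ hφ⟩

end ZariskiNhds

section IrreducibleOpen

open scoped Polynomial
open Polynomial (mapRingHom)

variable {A K : Type*} [CommRing A] [Field K] [IsAlgClosed K]

lemma exists_comp_algebraMap_eq_of_isIntegral {E : Type*} [CommRing E]
    [Algebra A E] [Algebra.IsIntegral A E] (φ : A →+* K)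
    (h : RingHom.ker (algebraMap A E) ≤ RingHom.ker φ) :
    ∃ ψ : E →+* K, ψ.comp (algebraMap A E) = φ := by
  let P := RingHom.ker φ
  have : P.IsPrime := RingHom.ker_isPrime φ
  obtain ⟨Q, -, hQ, hQP⟩ := Ideal.exists_ideal_over_prime_of_isIntegral P (⊥ : Ideal E) h
  have : Q.LiesOver P := ⟨hQP.symm⟩
  let : Algebra (A ⧸ P) K := (RingHom.kerLift φ).toAlgebra
  have : FaithfulSMul (A ⧸ P) K :=
    (faithfulSMul_iff_algebraMap_injective _ _).2 (RingHom.kerLift_injective φ)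
  let ψ : E ⧸ Q →ₐ[A ⧸ P] K := IsAlgClosed.lift
  refine ⟨ψ.toRingHom.comp (Ideal.Quotient.mk Q), RingHom.ext fun x ↦ ?_⟩
  exact ψ.commutes (Ideal.Quotient.mk P x)

lemma exists_monic_map_mapRingHom_eq {E S : Type*} [CommRing E] [CommRing S] {f : E →+* S}
    {Q : S[X][X]} (hQ : Q.Monic) (h : ∀ k j, (Q.coeff k).coeff j ∈ Set.range f) :
    ∃ q : E[X][X], q.map (mapRingHom f) = Q ∧ q.natDegree = Q.natDegree ∧ q.Monic := by
  refine Polynomial.lifts_and_natDegree_eq_and_monic ?_ hQ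
  refine (Polynomial.lifts_iff_coeff_lifts Q).2 fun k ↦ ?_
  obtain ⟨c, hc⟩ := (Polynomial.lifts_iff_coeff_lifts (Q.coeff k)).2 (h k)
  exact ⟨c, hc⟩

attribute [local instance] Polynomial.algebra in
/-- The coefficients of a monic factor are integral over `A`, which is why it can be specialised. -/
lemma exists_monic_dvd_of_ker_le {S : Type*} [CommRing S] [Algebra A S] {p : A[X][X]}
    (hp : p.Monic) {Q : S[X][X]} (hQ : Q.Monic) (hQp : Q ∣ p.map (mapRingHom (algebraMap A S)))
    {φ : A →+* K} (h : RingHom.ker (algebraMap A S) ≤ RingHom.ker φ) :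
    ∃ q, q.Monic ∧ q.natDegree = Q.natDegree ∧ q ∣ p.map (mapRingHom φ) := by
  let E := integralClosure A S
  have hint (k j) : IsIntegral A ((Q.coeff k).coeff j) :=
    (Polynomial.isIntegral_coeff_of_dvd p Q hp hQ hQp k).coeff j
  obtain ⟨q, rfl, hdeg, hq⟩ := exists_monic_map_mapRingHom_eq (f := algebraMap E S) hQ
    fun k j ↦ ⟨⟨_, hint k j⟩, rfl⟩
  have hqp : q ∣ p.map (mapRingHom (algebraMap A E)) := by
    rwa [IsScalarTower.algebraMap_eq A E S, ← Polynomial.mapRingHom_comp, ← Polynomial.map_map,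
      Polynomial.map_dvd_map _ (Polynomial.map_injective _ Subtype.val_injective) hq] at hQp
  obtain ⟨ψ, rfl⟩ := exists_comp_algebraMap_eq_of_isIntegral (E := E) φ fun a ha ↦ h <| by
    rw [RingHom.mem_ker] at ha ⊢
    rw [IsScalarTower.algebraMap_apply A E S, ha, map_zero]
  refine ⟨q.map (mapRingHom ψ), hq.map _, by rw [hq.natDegree_map, hdeg], ?_⟩
  rw [← Polynomial.mapRingHom_comp, ← Polynomial.map_map]
  exact Polynomial.map_dvd _ hqp

lemma exists_monic_dvd_of_forall_eq_zero {p : A[X][X]} (hp : p.Monic) {ι : Type*}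
    {φ : ι → A →+* K} {φ₀ : A →+* K} (hφ : ∀ a, (∀ i, φ i a = 0) → φ₀ a = 0) {e : ℕ}
    (h : ∀ i, ∃ q, q.Monic ∧ q.natDegree = e ∧ q ∣ p.map (mapRingHom (φ i))) :
    ∃ q, q.Monic ∧ q.natDegree = e ∧ q ∣ p.map (mapRingHom φ₀) := by
  choose q hmonic hdeg hdvd using h
  have ⟨i₀⟩ : Nonempty ι := not_isEmpty_iff.1 fun hι ↦
    one_ne_zero ((map_one φ₀).symm.trans (hφ 1 (isEmptyElim ·)))
  obtain ⟨D, hD⟩ := exists_natDegree_coeff_le p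
  have hqD (i k) : ((q i).coeff k).natDegree ≤ D :=
    natDegree_coeff_le_of_dvd (hp.map _).ne_zero (hdvd i) (fun k ↦ by
      rw [Polynomial.coeff_map]; exact Polynomial.natDegree_map_le.trans (hD k)) k
  obtain ⟨Q, hQ, hQq⟩ := exists_monic_pi_map_eval hmonic hdeg hqD
  let : Algebra A (ι → K) := (RingHom.pi φ).toAlgebra
  have hQp : Q ∣ p.map (mapRingHom (algebraMap A (ι → K))) := by
    rw [← Polynomial.modByMonic_eq_zero_iff_dvd hQ]
    refine eq_zero_of_map_eval fun i ↦ ?_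
    rw [Polynomial.map_modByMonic _ hQ, hQq, Polynomial.map_map, Polynomial.mapRingHom_comp,
      Polynomial.modByMonic_eq_zero_iff_dvd (hmonic i)]
    exact hdvd i
  obtain ⟨r, hr, hrQ, hrp⟩ := exists_monic_dvd_of_ker_le hp hQ hQp fun a ha ↦
    hφ a fun i ↦ congrFun ha i
  refine ⟨r, hr, ?_, hrp⟩
  rw [hrQ, ← hdeg i₀, ← hQq i₀, hQ.natDegree_map]

lemma eventually_not_exists_monic_dvd {p : A[X][X]} (hp : p.Monic) {φ₀ : A →+* K} {e : ℕ}
    (h : ¬ ∃ q, q.Monic ∧ q.natDegree = e ∧ q ∣ p.map (mapRingHom φ₀)) :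
    ∀ᶠ φ in zariskiNhds φ₀, ¬ ∃ q, q.Monic ∧ q.natDegree = e ∧ q ∣ p.map (mapRingHom φ) := by
  rw [eventually_zariskiNhds]
  by_contra! hcon
  let ι := {φ : A →+* K // ∃ q, q.Monic ∧ q.natDegree = e ∧ q ∣ p.map (mapRingHom φ)}
  refine h (exists_monic_dvd_of_forall_eq_zero hp (ι := ι) (φ := Subtype.val) (fun a ha ↦ ?_)
    Subtype.property)
  by_contra ha₀
  obtain ⟨φ, hφa, hφ⟩ := hcon a ha₀
  exact hφa (ha ⟨φ, hφ⟩)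

theorem eventually_irreducible_map {p : A[X][X]} (hp : p.Monic) {φ₀ : A →+* K}
    (h : Irreducible (p.map (mapRingHom φ₀))) :
    ∀ᶠ φ in zariskiNhds φ₀, Irreducible (p.map (mapRingHom φ)) := by
  have hdeg (φ : A →+* K) : (p.map (mapRingHom φ)).natDegree = p.natDegree :=
    hp.natDegree_map _
  have hne (φ : A →+* K) : p.map (mapRingHom φ) ≠ 1 := by
    rw [Ne, ← (hp.map _).natDegree_eq_zero, hdeg φ, ← hdeg φ₀,
      (hp.map _).natDegree_eq_zero]
    exact h.ne_one
  have hiff (φ : A →+* K) : Irreducible (p.map (mapRingHom φ)) ↔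
      ∀ e ∈ Finset.Ioc 0 (p.natDegree / 2),
        ¬ ∃ q, q.Monic ∧ q.natDegree = e ∧ q ∣ p.map (mapRingHom φ) := by
    rw [(hp.map _).irreducible_iff_lt_natDegree_lt (hne φ), hdeg]
    exact ⟨fun hq e he ⟨q, hq', hqe, hqp⟩ ↦ hq q hq' (hqe ▸ he) hqp,
      fun hq q hq' he hqp ↦ hq _ he ⟨q, hq', rfl, hqp⟩⟩
  simp only [hiff, Filter.eventually_all_finset] at h ⊢
  exact fun e he ↦ eventually_not_exists_monic_dvd hp (h e he)

end IrreducibleOpen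

section Expand

open scoped Polynomial

variable {B : Type*} [CommRing B] [IsDomain B] {c : B}

lemma eval₂_expand_ne_zero {p : B[X][X]} (hp : p.Monic) {N : ℕ} (hN : p.natDegree < N)
    (hc : c ≠ 0) :
    p.eval₂ (Polynomial.expand B N).toRingHom (.C c * .X) ≠ 0 := by
  have hterm (i k : ℕ) : ((Polynomial.expand B N).toRingHom (p.coeff i) *
      (.C c * .X) ^ i).coeff k =
      if i ≤ k then (Polynomial.expand B N (p.coeff i)).coeff (k - i) * c ^ i else 0 := by
    rw [mul_pow, ← mul_assoc, Polynomial.coeff_mul_X_pow', ← Polynomial.C_pow,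
      Polynomial.coeff_mul_C]
    rfl
  -- As `p.natDegree < N`, only the leading term of `p` contributes to this coefficient.
  suffices h : (p.eval₂ (Polynomial.expand B N).toRingHom (.C c * .X)).coeff p.natDegree =
      c ^ p.natDegree from
    fun h0 ↦ pow_ne_zero _ hc (by rw [← h, h0, Polynomial.coeff_zero])
  rw [Polynomial.eval₂_eq_sum_range, Polynomial.finsetSum_coeff, Finset.sum_range_succ,
    Finset.sum_eq_zero, zero_add, hterm, if_pos le_rfl, hp.coeff_natDegree, map_one, Nat.sub_self,
    Polynomial.coeff_one_zero, one_mul]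
  intro i hi
  have hi' := Finset.mem_range.1 hi
  rw [hterm, if_pos hi'.le, Polynomial.coeff_expand (by omega),
    if_neg (Nat.not_dvd_of_pos_of_lt (by omega) (by omega)), zero_mul]

lemma irreducible_of_eval₂_expand_eq_zero {p : B[X][X]} (hp : p.Monic) (hc : c ≠ 0)
    (h : p.eval₂ (Polynomial.expand B p.natDegree).toRingHom (.C c * .X) = 0) :
    Irreducible p := by
  refine hp.irreducible_iff_natDegree.2 ⟨?_, fun q r hq hr hqr ↦ ?_⟩
  · rintro rfl
    exact one_ne_zero ((Polynomial.eval₂_one _ _).symm.trans h)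
  · subst hqr
    by_contra! hdeg
    have hadd : (q * r).natDegree = q.natDegree + r.natDegree := hq.natDegree_mul hr
    rw [Polynomial.eval₂_mul] at h
    rcases mul_eq_zero.1 h with hq0 | hr0
    · exact eval₂_expand_ne_zero hq (by omega) hc hq0
    · exact eval₂_expand_ne_zero hr (by omega) hc hr0

end Expand

section Eigenvalue

variable {ι S : Type*} [Fintype ι] [DecidableEq ι] [CommRing S] [IsDomain S]

lemma eval_charpoly_eq_zero_of_vecMul {N : Matrix ι ι S} {y : ι → S} (hy : y ≠ 0) {c : S}
    (h : Matrix.vecMul y N = c • y) : N.charpoly.eval c = 0 := by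
  rw [Matrix.eval_charpoly, ← Matrix.exists_vecMul_eq_zero_iff]
  refine ⟨y, hy, ?_⟩
  rw [Matrix.vecMul_sub, h, Matrix.scalar_apply, sub_eq_zero]
  ext i
  rw [Matrix.vecMul_diagonal, Pi.smul_apply, smul_eq_mul, mul_comm]

end Eigenvalue

section Specialization

open scoped Polynomial

variable {σ K : Type*} [Fintype σ] [DecidableEq σ] {a : σ → ℕ}

lemma eval₂_charpoly_eq_zero [CommRing K] {f : σ → MvPolynomial σ K} (ha : ∀ j, 0 < a j)
    {w : MvPolynomial σ K} {M : Matrix (∀ j, Fin (a j)) (∀ j, Fin (a j)) (MvPolynomial σ K)}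
    (hM : ∀ β, w * ∏ j, X j ^ (β j : ℕ) = adicSum f a fun α ↦ M α β)
    {S T : Type*} [CommRing S] [IsDomain S] [CommRing T] {χ : MvPolynomial σ K →+* S}
    {κ : T →+* S} {θ : MvPolynomial σ K →+* T} (h : ∀ g, χ (aeval f g) = κ (θ g)) :
    (M.map θ).charpoly.eval₂ κ (χ w) = 0 := by
  let y (α : ∀ j, Fin (a j)) : S := χ (∏ j, X j ^ (α j : ℕ))
  have hy : y ≠ 0 := fun hy ↦ by
    have := congrFun hy fun j ↦ ⟨0, ha j⟩
    simp [y] at this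
  rw [Polynomial.eval₂_eq_eval_map, ← Matrix.charpoly_map]
  refine eval_charpoly_eq_zero_of_vecMul hy (funext fun β ↦ ?_)
  have := congrArg χ (hM β)
  rw [map_mul, adicSum_apply, map_sum] at this
  rw [Pi.smul_apply, smul_eq_mul, this]
  refine Finset.sum_congr rfl fun α _ ↦ ?_
  rw [map_mul, h, mul_comm]
  rfl

lemma irreducible_charpoly_of_eval_eq_X [CommRing K] [IsDomain K] {f : σ → MvPolynomial σ K}
    (ha : ∀ j, 0 < a j) {c : K} (hc : c ≠ 0) {w : σ}
    {M : Matrix (∀ j, Fin (a j)) (∀ j, Fin (a j)) (MvPolynomial σ K)}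
    (hM : ∀ β, C c * X w * ∏ j, X j ^ (β j : ℕ) = adicSum f a fun α ↦ M α β)
    {q : σ → K[X]} {χ : MvPolynomial σ K →ₐ[K] K[X]}
    (hχ : ∀ j, χ (f j) = Polynomial.expand K (∏ j, a j) (q j)) (hw : χ (X w) = .X) :
    Irreducible (M.map (aeval q)).charpoly := by
  have hdeg : (M.map (aeval q)).charpoly.natDegree = ∏ j, a j := by
    simp [Matrix.charpoly_natDegree_eq_dim]
  have hcomp (g : MvPolynomial σ K) :
      χ (aeval f g) = Polynomial.expand K (∏ j, a j) (aeval q g) := by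
    suffices h : χ.comp (aeval f) = (Polynomial.expand K (∏ j, a j)).comp (aeval q) from
      DFunLike.congr_fun h g
    exact algHom_ext fun j ↦ by simp [hχ]
  refine irreducible_of_eval₂_expand_eq_zero (Matrix.charpoly_monic _) hc ?_
  have := eval₂_charpoly_eq_zero ha hM (χ := χ.toRingHom) (θ := (aeval q).toRingHom)
    (κ := (Polynomial.expand K (∏ j, a j)).toRingHom) hcomp
  rw [hdeg, ← hw, ← Polynomial.algebraMap_eq, ← χ.commutes c, ← map_mul]
  exact this

theorem isPrime_span_of_irreducible_charpoly_aeval [Field K] {f : σ → MvPolynomial σ K}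
    (h : Function.Bijective (adicSum f a)) {w : MvPolynomial σ K}
    {M : Matrix (∀ j, Fin (a j)) (∀ j, Fin (a j)) (MvPolynomial σ K)}
    (hM : ∀ β, w * ∏ j, X j ^ (β j : ℕ) = adicSum f a fun α ↦ M α β)
    {s : Set σ} {q : σ → K[X]} (hq : ∀ j ∈ s, q j = 0)
    (hirr : Irreducible (M.map (aeval q)).charpoly) : (Ideal.span (f '' s)).IsPrime := by
  have hcomp : (aeval fun j : ↥sᶜ ↦ q j).comp (killCompl Subtype.val_injective) =
      (aeval q : MvPolynomial σ K →ₐ[K] K[X]) := by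
    refine algHom_ext fun j ↦ ?_
    rw [AlgHom.comp_apply]
    by_cases hj : j ∈ s
    · rw [killCompl_X_of_mem hj, map_zero, aeval_X, hq j hj]
    · rw [killCompl_X_of_notMem hj, aeval_X, aeval_X]
  refine isPrime_span_of_irreducible_charpoly h hM <|
    (Matrix.charpoly_monic _).irreducible_of_irreducible_map
      (aeval fun j : ↥sᶜ ↦ q j).toRingHom _ ?_
  rw [← Matrix.charpoly_map, Matrix.map_map]
  rwa [← hcomp] at hirr

end Specialization

section BaseChange

open scoped Polynomial

variable {σ A B : Type*} [CommRing A] [CommRing B] (φ : A →+* B)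

lemma totalDegree_map_le (p : MvPolynomial σ A) : (map φ p).totalDegree ≤ p.totalDegree :=
  Finset.sup_mono (support_map_subset φ p)

lemma map_charpoly_map_aeval {ι : Type*} [Fintype ι] [DecidableEq ι] (q : σ → A[X])
    (M : Matrix ι ι (MvPolynomial σ A)) :
    (M.map (aeval q)).charpoly.map (Polynomial.mapRingHom φ) =
      ((M.map (map φ)).map (aeval fun j ↦ (q j).map φ)).charpoly := by
  have hcomp : (Polynomial.mapRingHom φ).comp (aeval q : MvPolynomial σ A →ₐ[A] A[X]).toRingHom =
      (aeval fun j ↦ (q j).map φ : MvPolynomial σ B →ₐ[B] B[X]).toRingHom.comp (map φ) :=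
    ringHom_ext (fun r ↦ by simp) fun j ↦ by simp
  rw [← Matrix.charpoly_map]
  exact congrArg Matrix.charpoly (Matrix.ext fun i j ↦ DFunLike.congr_fun hcomp (M i j))

end BaseChange

section Family

open scoped Polynomial

variable {σ A : Type*} [Fintype σ] [CommRing A] {a : σ → ℕ}

lemma surjectsInDegree_map_iff [DecidableEq σ] {K : Type*} [Field K] {F : σ → MvPolynomial σ A}
    (hF : ∀ j, (F j).totalDegree ≤ a j) {φ : A →+* K} {k : ℕ} :
    SurjectsInDegree (fun j ↦ map φ (F j)) a k ↔ φ (substPowDet F a k) ≠ 0 := by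
  rw [map_substPowDet]
  exact surjectsInDegree_iff_substPowDet_ne_zero fun j ↦ (totalDegree_map_le φ _).trans (hF j)

lemma map_adicSum [DecidableEq σ] {B : Type*} [CommRing B] (φ : A →+* B) (f : σ → MvPolynomial σ A)
    (g : (∀ j, Fin (a j)) → MvPolynomial σ A) :
    map φ (adicSum f a g) = adicSum (fun j ↦ map φ (f j)) a fun α ↦ map φ (g α) := by
  simp only [adicSum_apply, map_sum, map_mul, map_prod, map_pow, map_X]
  refine Finset.sum_congr rfl fun α _ ↦ congrArg (· * _) ?_
  rw [map_aeval, aeval_def, ← coe_eval₂Hom, eval₂Hom_map_hom]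
  congr 2
  ext
  simp

lemma exists_mul_prod_eq_adicSum [DecidableEq σ] {F : σ → MvPolynomial σ A} (ha : ∀ j, 0 < a j)
    (hF : ∀ j, (F j).totalDegree ≤ a j) (w : σ) :
    ∃ M : Matrix (∀ j, Fin (a j)) (∀ j, Fin (a j)) (MvPolynomial σ A),
      ∀ β, C (substPowDet F a (∑ j, a j)) * X w * ∏ j, X j ^ (β j : ℕ) =
        adicSum F a fun α ↦ M α β := by
  have hmem (β : ∀ j, Fin (a j)) :
      X w * ∏ j, X j ^ (β j : ℕ) ∈ restrictTotalDegree σ A (∑ j, a j) := by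
    let ν : σ →₀ ℕ := Finsupp.equivFunOnFinite.symm fun j ↦ (β j : ℕ)
    have hν : ∏ j, X j ^ (β j : ℕ) = monomial ν (1 : A) := (monomial_one_eq_prod ν).symm
    rw [hν, X, monomial_mul, one_mul]
    refine monomial_one_mem_restrictTotalDegree ?_
    rw [map_add, Finsupp.degree_single, add_comm, Nat.add_one_le_iff, Finsupp.degree_eq_sum]
    exact Finset.sum_lt_sum_of_nonempty ⟨w, Finset.mem_univ w⟩ fun j _ ↦ (β j).2
  have hrange (β : ∀ j, Fin (a j)) : C (substPowDet F a (∑ j, a j)) * X w *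
      ∏ j, X j ^ (β j : ℕ) ∈ (adicSum F a).range := by
    rw [mul_assoc, ← smul_eq_C_mul, range_adicSum ha]
    exact exists_substPow_eq_substPowDet_smul hF (hmem β)
  choose g hg using hrange
  exact ⟨.of fun α β ↦ g β α, fun β ↦ (hg β).symm⟩

variable {K : Type*} [Field K] {F : σ → MvPolynomial σ A} {φ₀ : A →+* K}

theorem eventually_bijective_adicSum [DecidableEq σ] (ha : ∀ j, 0 < a j)
    (hF : ∀ j, (F j).totalDegree ≤ a j)
    (h₀ : SurjectsInDegree (fun j ↦ map φ₀ (F j)) a (∑ j, a j)) :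
    ∀ᶠ φ in zariskiNhds φ₀, Function.Bijective (adicSum (fun j ↦ map φ (F j)) a) :=
  eventually_zariskiNhds.2 ⟨_, (surjectsInDegree_map_iff hF).1 h₀, fun φ hφ ↦
    bijective_adicSum ha (((surjectsInDegree_map_iff hF).2 hφ).bijective_substPow ha
      (fun j ↦ (totalDegree_map_le φ _).trans (hF j)) le_rfl)⟩

theorem eventually_isPrime_span [IsAlgClosed K] (ha : ∀ j, 0 < a j)
    (hF : ∀ j, (F j).totalDegree ≤ a j)
    (h₀ : SurjectsInDegree (fun j ↦ map φ₀ (F j)) a (∑ j, a j))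
    {s : Set σ} {q : σ → A[X]} (hq : ∀ j ∈ s, q j = 0) {χ : MvPolynomial σ K →ₐ[K] K[X]}
    (hχ : ∀ j, χ (map φ₀ (F j)) = Polynomial.expand K (∏ j, a j) ((q j).map φ₀))
    {w : σ} (hw : χ (X w) = .X) :
    ∀ᶠ φ in zariskiNhds φ₀, (Ideal.span ((fun j ↦ map φ (F j)) '' s)).IsPrime := by
  classical
  obtain ⟨M, hM⟩ := exists_mul_prod_eq_adicSum ha hF w
  have hMφ (φ : A →+* K) (β : ∀ j, Fin (a j)) :
      C (φ (substPowDet F a (∑ j, a j))) * X w * ∏ j, X j ^ (β j : ℕ) =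
        adicSum (fun j ↦ map φ (F j)) a fun α ↦ (M.map (map φ)) α β := by
    have hMβ := congrArg (map φ) (hM β)
    simpa only [Matrix.map_apply, map_adicSum, map_mul, map_prod, map_pow, map_C, map_X] using hMβ
  have hirr := eventually_irreducible_map (φ₀ := φ₀) (Matrix.charpoly_monic (M.map (aeval q))) <| by
    rw [map_charpoly_map_aeval]
    exact irreducible_charpoly_of_eval_eq_X ha ((surjectsInDegree_map_iff hF).1 h₀) (hMφ φ₀) hχ hw
  filter_upwards [hirr, eventually_bijective_adicSum ha hF h₀] with φ hφ hbij
  rw [map_charpoly_map_aeval] at hφ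
  exact isPrime_span_of_irreducible_charpoly_aeval hbij (hMφ φ)
    (fun j hj ↦ by rw [hq j hj, Polynomial.map_zero]) hφ

end Family

section UniversalPolynomial

variable {σ τ K : Type*} [CommRing K]

variable (K) in
/-- The `i`-th member of a family of universal polynomials in the variables `σ`: it has degree `e`
and its coefficients are the independent variables `X (i, μ)`. -/
def univPoly [Fintype σ] (i : τ) (e : ℕ) : MvPolynomial σ (MvPolynomial (τ × (σ →₀ ℕ)) K) :=
  ∑ μ : {μ : σ →₀ ℕ | μ.degree ≤ e}, monomial μ.1 (X (i, μ.1))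

/-- The coefficients of a family of polynomials, as a point at which the coefficients of the
universal polynomials `univPoly` can be evaluated. -/
def coeffPoint (c : τ → MvPolynomial σ K) (x : τ × (σ →₀ ℕ)) : K :=
  coeff x.2 (c x.1)

variable [Fintype σ]

lemma totalDegree_univPoly_le (i : τ) (e : ℕ) :
    (univPoly K i e : MvPolynomial σ (MvPolynomial (τ × (σ →₀ ℕ)) K)).totalDegree ≤ e :=
  totalDegree_finsetSum_le fun μ _ ↦ (totalDegree_monomial_le _ _).trans μ.2

lemma map_eval_univPoly {c : τ → MvPolynomial σ K} {i : τ} {e : ℕ}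
    (hc : (c i).totalDegree ≤ e) : map (eval (coeffPoint c)) (univPoly K i e) = c i := by
  have hrepr := congrArg Subtype.val <|
    (monomialBasis σ K e).sum_repr ⟨c i, (mem_restrictTotalDegree ..).2 hc⟩
  simp only [AddSubmonoidClass.coe_finsetSum, SetLike.val_smul, coe_monomialBasis,
    monomialBasis_repr_apply, ← monomial_eq_smul_one] at hrepr
  simp only [univPoly, map_sum, map_monomial, eval_X, coeffPoint, hrepr]

end UniversalPolynomial

section Extend

variable {σ τ : Type*} {ε : τ ↪ σ} {δ : τ → ℕ}

lemma extend_one_pos (hδ : ∀ i, 0 < δ i) (j : σ) : 0 < Function.extend ε δ 1 j := by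
  by_cases hj : j ∈ Set.range ε
  · obtain ⟨i, rfl⟩ := hj
    rw [ε.injective.extend_apply]
    exact hδ i
  · rw [Function.extend_apply' _ _ _ hj]
    exact zero_lt_one

variable {K : Type*} [Fintype σ] [CommRing K]

lemma surjectsInDegree_extend_of_weight_lt (hδ : ∀ i, 0 < δ i) (g : τ → MvPolynomial σ K)
    (hg : ∀ i, (g i).totalDegree ≤ δ i) (w : σ → ℕ)
    (hw : ∀ i, ∀ ν ∈ (g i).support, Finsupp.weight w ν < δ i * w (ε i)) (k : ℕ) :
    SurjectsInDegree (Function.extend ε (fun i ↦ X (ε i) ^ δ i - g i) X)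
      (Function.extend ε δ 1) k := by
  have hsub : Function.extend ε (fun i ↦ X (ε i) ^ δ i - g i) X =
      fun j ↦ X j ^ Function.extend ε δ 1 j - Function.extend ε g 0 j := by
    funext j
    by_cases hj : j ∈ Set.range ε
    · obtain ⟨i, rfl⟩ := hj
      simp only [ε.injective.extend_apply]
    · simp only [Function.extend_apply' _ _ _ hj, Pi.one_apply, pow_one, Pi.zero_apply, sub_zero]
  rw [hsub]
  refine surjectsInDegree_of_weight_lt (extend_one_pos hδ) _ w (fun j ↦ ?_) (fun j ↦ ?_) k <;>
    by_cases hj : j ∈ Set.range ε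
  · obtain ⟨i, rfl⟩ := hj
    simpa only [ε.injective.extend_apply] using hg i
  · simp [Function.extend_apply' _ _ _ hj]
  · obtain ⟨i, rfl⟩ := hj
    simpa only [ε.injective.extend_apply] using hw i
  · simp [Function.extend_apply' _ _ _ hj]

end Extend

section Chain

open scoped Polynomial

variable {σ K : Type*} [CommRing K] {r : ℕ} (e : Fin (r + 2) ↪ σ) (δ : Fin r → ℕ)

/-- The first `r` of `r + 2` variables; the `i`-th of them is the one whose `δ i`-th power the
`i`-th equation of a system of `r` equations expresses. -/
def leadVar : Fin r ↪ σ := (Fin.castSuccEmb.trans Fin.castSuccEmb).trans e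

lemma leadVar_apply (i : Fin r) : leadVar e i = e i.castSucc.castSucc := rfl

variable (K) in
/-- The system `x i ^ δ i = x (i + 1) * x (r + 1) ^ (δ i - 1)` for `i < r`. -/
def chainPoly (i : Fin r) : MvPolynomial σ K :=
  X (leadVar e i) ^ δ i - X (e i.succ.castSucc) * X (e (Fin.last (r + 1))) ^ (δ i - 1)

variable (K) in
/-- The curve `x i = t ^ (∏ l < i, δ l)`, `x (r + 1) = 1` on which `chainPoly` vanishes. -/
def chainCurve : MvPolynomial σ K →ₐ[K] K[X] :=
  aeval (Function.extend e (Fin.snoc (fun k ↦ .X ^ Fin.partialProd δ k) 1) 0)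

variable (K) in
/-- The values on `chainCurve` of the variables other than `leadVar`, as polynomials in
`t ^ ∏ i, δ i`, and `0` at `leadVar`. -/
def chainValue : σ → K[X] :=
  Function.extend e (Fin.snoc (Fin.snoc 0 .X) 1) 0

variable {e δ}

lemma eq_leadVar_or_notMem_range (e : Fin (r + 2) ↪ σ) (j : σ) :
    (∃ i, j = leadVar e i) ∨ (j = e (Fin.last r).castSucc ∨ j = e (Fin.last (r + 1)) ∨
      j ∉ Set.range e) ∧ j ∉ Set.range (leadVar e) := by
  have hlead (k : Fin (r + 2)) (hk : r ≤ k) : e k ∉ Set.range (leadVar e) := by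
    rintro ⟨i, hi⟩
    have hik : (i : ℕ) = k := congrArg Fin.val (e.injective hi)
    omega
  by_cases hj : j ∈ Set.range e
  · obtain ⟨k, rfl⟩ := hj
    induction k using Fin.lastCases with
    | last => exact .inr ⟨.inr (.inl rfl), hlead _ (by simp)⟩
    | cast k =>
      induction k using Fin.lastCases with
      | last => exact .inr ⟨.inl rfl, hlead _ (by simp)⟩
      | cast i => exact .inl ⟨i, rfl⟩
  · exact .inr ⟨.inr (.inr hj), fun ⟨i, hi⟩ ↦ hj ⟨_, hi⟩⟩

lemma chainCurve_X_castSucc (k : Fin (r + 1)) :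
    chainCurve K e δ (X (e k.castSucc)) = .X ^ Fin.partialProd δ k := by
  rw [chainCurve, aeval_X, e.injective.extend_apply, Fin.snoc_castSucc]

lemma chainCurve_X_last : chainCurve K e δ (X (e (Fin.last (r + 1)))) = 1 := by
  rw [chainCurve, aeval_X, e.injective.extend_apply, Fin.snoc_last]

lemma chainCurve_chainPoly (i : Fin r) : chainCurve K e δ (chainPoly K e δ i) = 0 := by
  rw [chainPoly, map_sub, map_mul, map_pow, map_pow, leadVar_apply, chainCurve_X_castSucc,
    chainCurve_X_castSucc, chainCurve_X_last, one_pow, mul_one, Fin.partialProd_succ, pow_mul,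
    sub_self]

lemma chainValue_leadVar (i : Fin r) : chainValue K e (leadVar e i) = 0 := by
  rw [chainValue, leadVar_apply, e.injective.extend_apply, Fin.snoc_castSucc, Fin.snoc_castSucc,
    Pi.zero_apply]

lemma chainValue_of_notMem_range {j : σ} (hj : j ∉ Set.range e) : chainValue K e j = 0 :=
  Function.extend_apply' _ _ _ hj

lemma map_chainValue {L : Type*} [CommRing L] (φ : K →+* L) (j : σ) :
    (chainValue K e j).map φ = chainValue L e j := by
  rw [chainValue, chainValue, Function.apply_extend (Polynomial.map φ)]
  congr 1
  · ext k : 1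
    induction k using Fin.lastCases with
    | last => simp
    | cast k => induction k using Fin.lastCases <;> simp
  · ext1
    simp

lemma prod_extend_leadVar [Fintype σ] :
    ∏ j, Function.extend (leadVar e) δ 1 j = ∏ i, δ i :=
  (Fintype.prod_of_injective _ (leadVar e).injective _ _
    (fun j hj ↦ Function.extend_apply' _ _ j hj)
    fun i ↦ ((leadVar e).injective.extend_apply _ _ i).symm).symm

lemma chainCurve_extend_chainPoly [Fintype σ] (j : σ) :
    chainCurve K e δ (Function.extend (leadVar e) (chainPoly K e δ) X j) =
      Polynomial.expand K (∏ j, Function.extend (leadVar e) δ 1 j) (chainValue K e j) := by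
  rw [prod_extend_leadVar]
  obtain ⟨i, rfl⟩ | ⟨hj, hlead⟩ := eq_leadVar_or_notMem_range e j
  · rw [(leadVar e).injective.extend_apply, chainCurve_chainPoly, chainValue_leadVar, map_zero]
  · rw [Function.extend_apply' _ _ _ hlead]
    obtain rfl | rfl | hj := hj
    · rw [chainCurve_X_castSucc, chainValue, e.injective.extend_apply, Fin.snoc_castSucc,
        Fin.snoc_last, Polynomial.expand_X, Fin.partialProd, Fin.val_last, ← List.prod_ofFn,
        List.take_of_length_le (by simp)]
    · rw [chainCurve_X_last, chainValue, e.injective.extend_apply, Fin.snoc_last, map_one]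
    · rw [chainCurve, aeval_X, Function.extend_apply' _ _ _ hj, chainValue_of_notMem_range hj,
        map_zero, Pi.zero_apply]

lemma isHomogeneous_chainPoly (hδ : ∀ i, 0 < δ i) (i : Fin r) :
    (chainPoly K e δ i).IsHomogeneous (δ i) := by
  have hmul := (isHomogeneous_X K (e i.succ.castSucc)).mul
    ((isHomogeneous_X K (e (Fin.last (r + 1)))).pow (δ i - 1))
  have hpow := (isHomogeneous_X K (leadVar e i)).pow (δ i)
  rw [one_mul] at hpow
  rw [one_mul, Nat.add_sub_cancel' (hδ i)] at hmul
  exact hpow.sub hmul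

lemma chainPoly_mem_supported {V : Set σ} (he : Set.range e ⊆ V) (i : Fin r) :
    chainPoly K e δ i ∈ supported K V := by
  have hX (k) : (X (e k) : MvPolynomial σ K) ∈ supported K V :=
    Algebra.subset_adjoin ⟨_, he ⟨k, rfl⟩, rfl⟩
  exact sub_mem (pow_mem (hX _) _) (mul_mem (hX _) (pow_mem (hX _) _))

lemma surjectsInDegree_chainPoly [Fintype σ] (hδ : ∀ i, 0 < δ i) (k : ℕ) :
    SurjectsInDegree (Function.extend (leadVar e) (chainPoly K e δ) X)
      (Function.extend (leadVar e) δ 1) k := by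
  let ν (i : Fin r) : σ →₀ ℕ :=
    Finsupp.single (e i.succ.castSucc) 1 + Finsupp.single (e (Fin.last (r + 1))) (δ i - 1)
  have hν : chainPoly K e δ = fun i ↦ X (leadVar e i) ^ δ i - monomial (ν i) 1 := by
    funext i
    rw [chainPoly, X_pow_eq_monomial (e := δ i - 1), X, X, monomial_mul, one_mul]
  let w : σ → ℕ := Function.extend e (fun k ↦ r - k) 0
  have hw (k) : w (e k) = r - k := e.injective.extend_apply _ _ k
  rw [hν]
  refine surjectsInDegree_extend_of_weight_lt hδ _ (fun i ↦ ?_) w (fun i μ hμ ↦ ?_) k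
  · have hdeg : (ν i).degree = δ i := by
      rw [map_add, Finsupp.degree_single, Finsupp.degree_single, Nat.add_sub_cancel' (hδ i)]
    exact (totalDegree_monomial_le _ _).trans_eq hdeg
  · obtain rfl := Finset.mem_singleton.1 (support_monomial_subset hμ)
    have hweight : Finsupp.weight w (ν i) = r - (i + 1) := by
      simp only [ν, map_add, Finsupp.weight_single, hw, smul_eq_mul, one_mul, Fin.val_castSucc,
        Fin.val_succ, Fin.val_last, Nat.sub_eq_zero_of_le r.le_succ, mul_zero, add_zero]
    have hi : r - (i + 1) < r - (i : ℕ) := by omega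
    rw [hweight, leadVar_apply, hw]
    exact hi.trans_le (Nat.le_mul_of_pos_left _ (hδ i))

end Chain

section Generic

variable {σ τ K : Type*} [Field K]

lemma image_extend_compl_union_range {ε : τ ↪ σ} {V : Set σ} (hε : Set.range ε ⊆ V)
    (c : τ → MvPolynomial σ K) :
    Function.extend ε c X '' (Vᶜ ∪ Set.range ε) = X '' Vᶜ ∪ Set.range c := by
  have hX : Set.EqOn (Function.extend ε c X) X Vᶜ := fun j hj ↦
    Function.extend_apply' _ _ _ fun hjε ↦ hj (hε hjε)
  rw [Set.image_union, hX.image_eq, ← Set.range_comp, Function.extend_comp ε.injective]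

lemma chainValue_eq_zero {A : Type*} [CommRing A] {r : ℕ} {e : Fin (r + 2) ↪ σ} {V : Set σ}
    (he : Set.range e ⊆ V) : ∀ j ∈ Vᶜ ∪ Set.range (leadVar e), chainValue A e j = 0
  | _, .inl hj => chainValue_of_notMem_range fun hje ↦ hj (he hje)
  | _, .inr ⟨i, rfl⟩ => chainValue_leadVar i

lemma map_extend_univPoly [Fintype σ] {ε : τ ↪ σ} {δ : τ → ℕ} {c : τ → MvPolynomial σ K}
    (hc : ∀ i, (c i).totalDegree ≤ δ i) :
    (fun j ↦ map (eval (coeffPoint c)) (Function.extend ε (fun i ↦ univPoly K i (δ i)) X j)) =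
      Function.extend ε c X := by
  funext j
  rw [Function.apply_extend (map (eval (coeffPoint c)))]
  congr 1
  · funext i
    exact map_eval_univPoly (hc i)
  · funext j
    exact map_X _ j

lemma totalDegree_extend_univPoly_le [Fintype σ] {ε : τ ↪ σ} {δ : τ → ℕ} (j : σ) :
    (Function.extend ε (fun i ↦ univPoly K i (δ i)) X j).totalDegree ≤
      Function.extend ε δ 1 j := by
  by_cases hj : j ∈ Set.range ε
  · obtain ⟨i, rfl⟩ := hj
    simpa only [ε.injective.extend_apply] using totalDegree_univPoly_le i (δ i)
  · simp only [Function.extend_apply' _ _ _ hj, totalDegree_X, Pi.one_apply, le_refl]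

theorem exists_forall_isPrime_span_and_ringKrullDim_eq [Finite σ] [IsAlgClosed K] {r : ℕ}
    {δ : Fin r → ℕ} (hδ : ∀ i, 0 < δ i) {V : Set σ} (hr : r + 2 ≤ V.ncard) :
    ∃ h : MvPolynomial (Fin r × (σ →₀ ℕ)) K,
      (∃ c, (∀ i, (c i).IsHomogeneous (δ i) ∧ c i ∈ supported K V) ∧ eval (coeffPoint c) h ≠ 0) ∧
      ∀ c : Fin r → MvPolynomial σ K, (∀ i, (c i).totalDegree ≤ δ i) → eval (coeffPoint c) h ≠ 0 →
        (Ideal.span (X '' Vᶜ ∪ Set.range c)).IsPrime ∧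
        ringKrullDim (MvPolynomial σ K ⧸ Ideal.span (X '' Vᶜ ∪ Set.range c)) =
          (V.ncard - r : ℕ) := by
  classical
  cases nonempty_fintype σ
  obtain ⟨e, he⟩ : ∃ e : Fin (r + 2) ↪ σ, Set.range e ⊆ V := by
    obtain ⟨e, he⟩ := Function.Embedding.exists_of_card_le_finset (α := Fin (r + 2))
      (s := V.toFinset) (by rwa [Fintype.card_fin, ← Set.ncard_eq_toFinset_card'])
    exact ⟨e, by rwa [Set.coe_toFinset] at he⟩
  have hlead : Set.range (leadVar e) ⊆ V := (Set.range_comp_subset_range _ e).trans he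
  have hhom (i : Fin r) := isHomogeneous_chainPoly (K := K) (e := e) hδ i
  have hF₀ := map_extend_univPoly (ε := leadVar e) fun i ↦ (hhom i).totalDegree_le
  have h₀ := surjectsInDegree_chainPoly (K := K) (e := e) hδ
    (∑ j, Function.extend (leadVar e) δ 1 j)
  rw [← hF₀] at h₀
  obtain ⟨h, hh₀, hh⟩ := eventually_zariskiNhds.1 <|
    (eventually_isPrime_span (extend_one_pos hδ) totalDegree_extend_univPoly_le h₀
      (chainValue_eq_zero he) (χ := chainCurve K e δ) (w := e 0)
      (fun j ↦ by rw [congrFun hF₀ j, map_chainValue, chainCurve_extend_chainPoly])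
      (by simpa using chainCurve_X_castSucc (K := K) (e := e) (δ := δ) 0)).and
    (eventually_bijective_adicSum (extend_one_pos hδ) totalDegree_extend_univPoly_le h₀)
  refine ⟨h, ⟨_, fun i ↦ ⟨hhom i, chainPoly_mem_supported he i⟩, hh₀⟩, fun c hc hch ↦ ?_⟩
  obtain ⟨hprime, hbij⟩ := hh _ hch
  rw [map_extend_univPoly hc] at hprime hbij
  have hdim := ringKrullDim_quotient_span (s := Vᶜ ∪ Set.range (leadVar e)) (extend_one_pos hδ) hbij
  rw [image_extend_compl_union_range hlead] at hprime hdim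
  refine ⟨hprime, hdim.trans ?_⟩
  rw [Nat.card_coe_set_eq, Set.compl_union, compl_compl, ← Set.sdiff_eq, Set.ncard_sdiff hlead,
    Set.ncard_range_of_injective (leadVar e).injective, Nat.card_fin]

end Generic

section AlgSet

variable {ι : Type*}

lemma isAlgSet_zeroLocus (I : Ideal (MvPolynomial ι ℂ)) : IsAlgSet (zeroLocus ℂ I) :=
  ⟨I, rfl⟩

lemma zeroLocus_vanishingIdeal_of_isAlgSet {S : Set (ι → ℂ)} (hS : IsAlgSet S) :
    zeroLocus ℂ (vanishingIdeal ℂ S) = S := by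
  obtain ⟨T, rfl⟩ := hS
  refine (zeroLocus_vanishingIdeal_le _).antisymm' fun x hx p hp ↦ ?_
  exact hx p fun y hy ↦ hy p hp

lemma algIrreducible_zeroLocus [Finite ι] (I : Ideal (MvPolynomial ι ℂ)) [hI : I.IsPrime] :
    AlgIrreducible (zeroLocus ℂ I) := by
  have hv := IsPrime.vanishingIdeal_zeroLocus (K := ℂ) I
  refine ⟨Set.nonempty_iff_ne_empty.2 fun h ↦ hI.ne_top ?_, fun A B hA hB hAB ↦ ?_⟩
  · rw [← hv, h, vanishingIdeal_empty]
  · have hmul : vanishingIdeal ℂ A * vanishingIdeal ℂ B ≤ I := by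
      rw [← hv]
      refine Ideal.mul_le.2 fun p hp q hq x hx ↦ ?_
      rw [map_mul, mul_eq_zero]
      exact (hAB hx).imp (hp x) (hq x)
    refine (hI.mul_le.1 hmul).imp (fun h ↦ ?_) fun h ↦ ?_
    · exact (zeroLocus_anti_mono h).trans (zeroLocus_vanishingIdeal_of_isAlgSet hA).le
    · exact (zeroLocus_anti_mono h).trans (zeroLocus_vanishingIdeal_of_isAlgSet hB).le

lemma isPrime_vanishingIdeal_of_algIrreducible {S : Set (ι → ℂ)} (hS : AlgIrreducible S) :
    (vanishingIdeal ℂ S).IsPrime := by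
  refine ⟨fun h ↦ ?_, fun {p q} hpq ↦ ?_⟩
  · obtain ⟨x, hx⟩ := hS.1
    have h1 : aeval x (1 : MvPolynomial ι ℂ) = 0 := (Ideal.eq_top_iff_one _).1 h x hx
    exact one_ne_zero ((map_one _).symm.trans h1)
  · have hsub (f : MvPolynomial ι ℂ) : IsAlgSet {x | eval x f = 0} :=
      ⟨{f}, by simp only [Set.mem_singleton_iff, forall_eq]⟩
    refine hS.2 _ _ (hsub p) (hsub q) fun x hx ↦ ?_
    have := hpq x hx
    rwa [map_mul, mul_eq_zero] at this

/-- The Nullstellensatz correspondence between irreducible algebraic subsets of `zeroLocus ℂ I`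
and primes containing `I`. -/
def irreducibleAlgSetOrderIso [Finite ι] (I : Ideal (MvPolynomial ι ℂ)) :
    {T : Set (ι → ℂ) // IsAlgSet T ∧ AlgIrreducible T ∧ T ⊆ zeroLocus ℂ I} ≃o
      (PrimeSpectrum.zeroLocus (I : Set (MvPolynomial ι ℂ)))ᵒᵈ where
  toFun T := .toDual ⟨⟨vanishingIdeal ℂ T.1, isPrime_vanishingIdeal_of_algIrreducible T.2.2.1⟩,
    le_zeroLocus_iff_le_vanishingIdeal.1 T.2.2.2⟩
  invFun P := ⟨zeroLocus ℂ P.ofDual.1.asIdeal, isAlgSet_zeroLocus _, algIrreducible_zeroLocus _,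
    zeroLocus_anti_mono P.ofDual.2⟩
  left_inv T := Subtype.ext (zeroLocus_vanishingIdeal_of_isAlgSet T.2.1)
  right_inv P := Subtype.ext <| PrimeSpectrum.ext <| IsPrime.vanishingIdeal_zeroLocus (K := ℂ) _
  map_rel_iff' {S T} := ⟨fun h ↦ by
    have hle : vanishingIdeal ℂ T.1 ≤ vanishingIdeal ℂ S.1 := h
    have hST := zeroLocus_anti_mono (K := ℂ) hle
    rwa [zeroLocus_vanishingIdeal_of_isAlgSet S.2.1,
      zeroLocus_vanishingIdeal_of_isAlgSet T.2.1] at hST, vanishingIdeal_anti_mono⟩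

lemma algDim_zeroLocus [Finite ι] (I : Ideal (MvPolynomial ι ℂ)) :
    algDim (zeroLocus ℂ I) = ringKrullDim (MvPolynomial ι ℂ ⧸ I) := by
  rw [ringKrullDim_quotient, ← Order.krullDim_orderDual]
  exact Order.krullDim_eq_of_orderIso (irreducibleAlgSetOrderIso I)

end AlgSet

section LinesThroughPoint

variable {σ R : Type*} [CommRing R]

lemma eval_smul_of_isHomogeneous {e : ℕ} {p : MvPolynomial σ R} (hp : p.IsHomogeneous e) (v : R)
    (x : σ → R) : eval (v • x) p = v ^ e * eval x p := by
  simp only [eval_eq, Finset.mul_sum, Pi.smul_apply, smul_eq_mul, mul_pow, Finset.prod_mul_distrib,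
    Finset.prod_pow_eq_pow_sum]
  refine Finset.sum_congr rfl fun μ hμ ↦ ?_
  have hdeg : μ.degree = e := by
    rw [Finsupp.degree_eq_weight_one]
    exact hp (mem_support_iff.1 hμ)
  rw [← Finsupp.degree_apply, hdeg, mul_left_comm]

lemma eval_congr_of_mem_supported {V : Set σ} {p : MvPolynomial σ R} (hp : p ∈ supported R V)
    {x y : σ → R} (hxy : Set.EqOn x y V) : eval x p = eval y p :=
  eval₂Hom_congr' rfl (fun _ hi _ ↦ hxy (mem_supported.1 hp hi)) rfl

variable [DecidableEq σ] {τ : Type*} [Fintype τ] {o : σ} {d : ℕ} {δ : τ → ℕ}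
  {c : τ → MvPolynomial σ R}

lemma eval_line_sum_X_pow_mul (hc : ∀ i, (c i).IsHomogeneous (δ i))
    (hco : ∀ i, c i ∈ supported R {j | j ≠ o}) {x : σ → R} (hx : x o = 0) (u v : R) :
    eval (u • Pi.single o 1 + v • x) (∑ i, X o ^ (d - δ i) * c i) =
      ∑ i, eval x (c i) * v ^ δ i * u ^ (d - δ i) := by
  rw [map_sum]
  refine Finset.sum_congr rfl fun i _ ↦ ?_
  have hline : Set.EqOn (u • Pi.single o 1 + v • x) (v • x) {j | j ≠ o} := fun j hj ↦ by
    simp [Pi.single_eq_of_ne hj]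
  rw [map_mul, eval_congr_of_mem_supported (hco i) hline, eval_smul_of_isHomogeneous (hc i),
    map_pow, eval_X]
  simp [hx, mul_comm]

lemma forall_sum_mul_pow_eq_zero_iff [IsDomain R] [Infinite R] {k : τ → ℕ}
    (hk : Function.Injective k) {a : τ → R} : (∀ u, ∑ i, a i * u ^ k i = 0) ↔ ∀ i, a i = 0 := by
  refine ⟨fun h i ↦ ?_, fun h u ↦ by simp only [h, zero_mul, Finset.sum_const_zero]⟩
  have hpoly : ∑ i, Polynomial.C (a i) * Polynomial.X ^ k i = 0 := Polynomial.funext fun u ↦ by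
    simpa [Polynomial.eval_finsetSum] using h u
  have hcoeff := congrArg (Polynomial.coeff · (k i)) hpoly
  simp only [Polynomial.finsetSum_coeff, Polynomial.coeff_C_mul_X_pow,
    Polynomial.coeff_zero] at hcoeff
  rwa [Finset.sum_eq_single i (fun j _ hji ↦ if_neg (hk.ne hji.symm)) (by simp), if_pos rfl]
    at hcoeff

lemma setOf_line_eq_zeroLocus {K : Type*} [Field K] [Infinite K] {c : τ → MvPolynomial σ K}
    (hδ : Function.Injective δ) (hδd : ∀ i, δ i ≤ d) (hc : ∀ i, (c i).IsHomogeneous (δ i))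
    (hco : ∀ i, c i ∈ supported K {j | j ≠ o}) :
    {x : σ → K | x o = 0 ∧ ∀ u v : K,
        eval (u • Pi.single o 1 + v • x) (∑ i, X o ^ (d - δ i) * c i) = 0} =
      zeroLocus K (Ideal.span (X '' {j | j ≠ o}ᶜ ∪ Set.range c)) := by
  have hinj : Function.Injective fun i ↦ d - δ i := fun i j hij ↦
    hδ (by have := hδd i; have := hδd j; dsimp only at hij; omega)
  ext x
  simp only [zeroLocus_span, Set.mem_union, or_imp, forall_and, Set.forall_mem_image,
    Set.forall_mem_range, Set.mem_ofPred_eq, Set.mem_compl_iff, ne_eq, not_not, forall_eq,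
    aeval_eq_eval, eval_X]
  refine and_congr_right fun hx ↦ ?_
  simp only [eval_line_sum_X_pow_mul hc hco hx]
  refine ⟨fun h ↦ ?_, fun h u v ↦ by simp only [h, zero_mul, Finset.sum_const_zero]⟩
  exact (forall_sum_mul_pow_eq_zero_iff hinj).1 fun u ↦ by simpa using h u 1

end LinesThroughPoint

section ZariskiOpen

lemma isZariskiOpen_setOf_ne_zero {M : Type*} [AddCommGroup M] [Module ℂ M] {g : M → ℂ}
    (hg : IsPolynomialFun g) : IsZariskiOpen {m | g m ≠ 0} :=
  ⟨{g}, by simpa only [Set.mem_singleton_iff, forall_eq], by ext; simp⟩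

lemma isPolynomialFun_eval_coeffPoint {σ τ : Type*} (W : τ → Submodule ℂ (MvPolynomial σ ℂ))
    (h : MvPolynomial (τ × (σ →₀ ℕ)) ℂ) :
    IsPolynomialFun fun c : ∀ i, W i ↦ eval (coeffPoint fun i ↦ (c i).1) h := by
  obtain ⟨k, f, -, p, rfl⟩ := exists_fin_rename h
  exact ⟨k, fun i ↦ lcoeff ℂ (f i).2 ∘ₗ (W (f i).1).subtype ∘ₗ LinearMap.proj (f i).1, p,
    fun c ↦ eval_rename f _ p⟩

end ZariskiOpen

/-- Let `Y = {∑_{i=m}^{d} x₀^{d-i} fᵢ = 0} ⊆ ℙⁿ` with the `fᵢ` general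
homogeneous forms of degree `i` in `x₁,…,xₙ`, so that `y = [1:0:…:0]` is the only singular
point, of multiplicity `m`. If `d < m + n − 2`, then the variety `Σ` of lines in `Y` through
`y` (viewed inside the hyperplane `{x₀ = 0}`, as a cone) is irreducible of projective
dimension `m + n − 2 − d ≥ 1` (cone dimension `m + n − 1 − d`). -/
theorem stmt14 (n m d : ℕ) (hm : 1 ≤ m) (hmd : m ≤ d) (hn : 2 ≤ n) (hd : d < m + n - 2) :
    ∃ U : Set (Π _i : Fin (d + 1 - m),
        ((homogeneousSubmodule (Fin (n + 1)) ℂ (m + (_i : ℕ))) ⊓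
          (Subalgebra.toSubmodule (supported ℂ {j : Fin (n + 1) | j ≠ 0})) :
            Submodule ℂ (MvPolynomial (Fin (n + 1)) ℂ))),
      IsZariskiOpen U ∧ U.Nonempty ∧
      ∀ c ∈ U,
        AlgIrreducible {x : Fin (n + 1) → ℂ | x 0 = 0 ∧ ∀ u v : ℂ,
            eval (u • (Pi.single 0 1 : Fin (n + 1) → ℂ) + v • x)
              (∑ i : Fin (d + 1 - m),
                X 0 ^ (d - (m + (i : ℕ))) * ((c i : MvPolynomial (Fin (n + 1)) ℂ))) = 0} ∧
        algDim {x : Fin (n + 1) → ℂ | x 0 = 0 ∧ ∀ u v : ℂ,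
            eval (u • (Pi.single 0 1 : Fin (n + 1) → ℂ) + v • x)
              (∑ i : Fin (d + 1 - m),
                X 0 ^ (d - (m + (i : ℕ))) * ((c i : MvPolynomial (Fin (n + 1)) ℂ))) = 0}
          = ((m + n - 1 - d : ℕ) : WithBot ℕ∞) := by
  have hV : {j : Fin (n + 1) | j ≠ 0}.ncard = n := by
    simp [Set.ncard_eq_toFinset_card', Finset.filter_ne']
  obtain ⟨h, ⟨c₀, hc₀, hc₀h⟩, hh⟩ := exists_forall_isPrime_span_and_ringKrullDim_eq (K := ℂ)
    (δ := fun i : Fin (d + 1 - m) ↦ m + i) (V := {j : Fin (n + 1) | j ≠ 0}) (fun i ↦ by omega)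
    (by rw [hV]; omega)
  refine ⟨{c | eval (coeffPoint fun i ↦ (c i).1) h ≠ 0}, ?_, ⟨fun i ↦ ⟨c₀ i, hc₀ i⟩, hc₀h⟩,
    fun c hch ↦ ?_⟩
  · exact isZariskiOpen_setOf_ne_zero <| isPolynomialFun_eval_coeffPoint _ h
  · obtain ⟨hprime, hdim⟩ := hh (fun i ↦ (c i).1) (fun i ↦ (c i).2.1.totalDegree_le) hch
    rw [setOf_line_eq_zeroLocus (δ := fun i : Fin (d + 1 - m) ↦ m + i) (fun i j hij ↦ by grind)
      (fun i ↦ by omega) (fun i ↦ (c i).2.1) (fun i ↦ (c i).2.2)]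
    refine ⟨algIrreducible_zeroLocus _, ?_⟩
    rw [algDim_zeroLocus, hdim, hV]
    congr 1
    omega
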